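/- arXiv:1606.05099 — 10 statements merged into one kernel-verified Lean document; each statement's English description precedes it below -/
import Mathlib

section
/- Let α ∈ ((√33 − 5)/2, √2 − 1) and let T_α be the 2-expansion map on [α, α+1]. Then T_α³(α) = T_α³(α + 1), i.e. matching holds for α with matching exponents (3,3). -/
/-- The `N`-expansion map for `N = 2`: `T_α(x) = 2/x - ⌊2/x - α⌋`. -/
noncomputable def Texp (α x : ℝ) : ℝ := 2 / x - ↑⌊2 / x - α⌋

theorem Texp_eq (α x y : ℝ) (d : ℤ) (h : 2 / x = y) (h1 : (d : ℝ) ≤ y - α) (h2 : y - α < d + 1) :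
    Texp α x = y - d := by
  unfold Texp
  rw [h, Int.floor_eq_iff.mpr ⟨h1, h2⟩]

theorem stmt_0 (α : ℝ) (h₁ : (Real.sqrt 33 - 5) / 2 < α) (h₂ : α < Real.sqrt 2 - 1) :
    Texp α (Texp α (Texp α α)) = Texp α (Texp α (Texp α (α + 1))) := by
  have s33 : (5.74 : ℝ) < Real.sqrt 33 := Real.lt_sqrt_of_sq_lt (by norm_num)
  have s2 : Real.sqrt 2 < 1.415 := (Real.sqrt_lt' (by norm_num)).2 (by norm_num)
  have q33 := Real.sq_sqrt (show (0 : ℝ) ≤ 33 by norm_num)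
  have q2 := Real.sq_sqrt (show (0 : ℝ) ≤ 2 by norm_num)
  have a1 : 0.37 < α := by linarith
  have a2 : α < 0.415 := by linarith
  have p1 : 0 < α ^ 2 + 5 * α - 2 := by nlinarith
  have p2 : α ^ 2 + 2 * α - 1 < 0 := by nlinarith
  have n1 : 0 < α := by linarith
  have n2 : 0 < 1 - 2 * α := by linarith
  have n3 : 0 < 1 - α := by linarith
  have n4 : 0 < 3 * α - 1 := by linarith
  have n5 : 0 < α + 1 := by linarith
  have m1 := n1.ne'
  have m2 := n2.ne'
  have m3 := n3.ne'
  have m4 := n4.ne'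
  have m5 := n5.ne'
  have e1 : Texp α α = 2 * (1 - 2 * α) / α := by
    rw [Texp_eq α α (2 / α) 4 rfl]
    · push_cast; field_simp; ring
    · rw [le_sub_iff_add_le, le_div_iff₀ n1]; push_cast; nlinarith
    · rw [sub_lt_iff_lt_add, div_lt_iff₀ n1]; push_cast; nlinarith
  have e2 : Texp α (2 * (1 - 2 * α) / α) = (3 * α - 1) / (1 - 2 * α) := by
    rw [Texp_eq α _ (α / (1 - 2 * α)) 1 (by field_simp)]
    · rw [eq_div_iff m2, sub_mul, div_mul_cancel₀ _ m2]; push_cast; ring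
    · rw [le_sub_iff_add_le, le_div_iff₀ n2]; push_cast; nlinarith
    · rw [sub_lt_iff_lt_add, div_lt_iff₀ n2]; push_cast; nlinarith
  have f1 : Texp α (α + 1) = (1 - α) / (α + 1) := by
    rw [Texp_eq α _ (2 / (α + 1)) 1 rfl]
    · push_cast; field_simp; ring
    · rw [le_sub_iff_add_le, le_div_iff₀ n5]; push_cast; nlinarith
    · rw [sub_lt_iff_lt_add, div_lt_iff₀ n5]; push_cast; nlinarith
  have f2 : Texp α ((1 - α) / (α + 1)) = 2 * (3 * α - 1) / (1 - α) := by
    rw [Texp_eq α _ (2 * (α + 1) / (1 - α)) 4 (by field_simp)]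
    · push_cast; field_simp; ring
    · rw [le_sub_iff_add_le, le_div_iff₀ n3]; push_cast; nlinarith
    · rw [sub_lt_iff_lt_add, div_lt_iff₀ n3]; push_cast; nlinarith
  rw [e1, e2, f1, f2]
  have k : 2 / (2 * (3 * α - 1) / (1 - α)) = 2 / ((3 * α - 1) / (1 - 2 * α)) + 1 := by
    field_simp; ring
  unfold Texp
  rw [k, add_sub_right_comm _ _ α, Int.floor_add_one]
  push_cast
  ring
end

section
/- Let α ∈ ((√33 − 5)/2, √2 − 1) and let T_α be the 2-expansion map on [α, α+1]. Then T_α(α) = (2 − 4α)/α, this value lies in the open interval (2/(α+2), α+1), and consequently T_α²(α) = (3α − 1)/(1 − 2α). -/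
theorem stmt_1 (α : ℝ) (h₁ : (Real.sqrt 33 - 5) / 2 < α) (h₂ : α < Real.sqrt 2 - 1) :
    Texp α α = (2 - 4 * α) / α ∧
    (2 - 4 * α) / α ∈ Set.Ioo (2 / (α + 2)) (α + 1) ∧
    Texp α (Texp α α) = (3 * α - 1) / (1 - 2 * α) := by
  have s33 : Real.sqrt 33 ^ 2 = 33 := Real.sq_sqrt (by norm_num)
  have s2 : Real.sqrt 2 ^ 2 = 2 := Real.sq_sqrt (by norm_num)
  have p33 : (5.744 : ℝ) < Real.sqrt 33 := Real.lt_sqrt_of_sq_lt (by norm_num)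
  have p2 : Real.sqrt 2 < 1.415 := by
    rw [Real.sqrt_lt' (by norm_num)]; norm_num
  have hl : 0.372 < α := by linarith
  have hu : α < 0.415 := by linarith
  have q1 : 0 < α ^ 2 + 5 * α - 2 := by nlinarith
  have q2 : α ^ 2 + 2 * α - 1 < 0 := by nlinarith
  have h0 : 0 < α := by linarith
  have hd : 0 < 1 - 2 * α := by linarith
  have hd0 : 1 - 2 * α ≠ 0 := hd.ne'
  have f1 : ⌊2 / α - α⌋ = 4 := by
    rw [Int.floor_eq_iff]
    have e : 2 / α - α = (2 - α ^ 2) / α := by field_simp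
    rw [e, le_div_iff₀ h0, div_lt_iff₀ h0]
    constructor <;> push_cast <;> nlinarith
  have t1 : Texp α α = (2 - 4 * α) / α := by
    unfold Texp
    rw [f1]; push_cast; field_simp
  have e2 : 2 / ((2 - 4 * α) / α) = α / (1 - 2 * α) := by
    have : 2 - 4 * α = 2 * (1 - 2 * α) := by ring
    rw [this]
    field_simp
  have f2 : ⌊α / (1 - 2 * α) - α⌋ = 1 := by
    rw [Int.floor_eq_iff]
    have e : α / (1 - 2 * α) - α = (2 * α ^ 2) / (1 - 2 * α) := by
      rw [div_sub' hd0]; congr 1; ring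
    rw [e, le_div_iff₀ hd, div_lt_iff₀ hd]
    constructor <;> push_cast <;> nlinarith
  refine ⟨t1, ⟨?_, ?_⟩, ?_⟩
  · rw [div_lt_div_iff₀ (by linarith) h0]; nlinarith
  · rw [div_lt_iff₀ h0]; nlinarith
  · rw [t1]
    unfold Texp
    rw [e2, f2]
    push_cast
    rw [div_sub' hd0]; congr 1; ring
end

section
/- Let α ∈ ((√33 − 5)/2, √2 − 1) and let T_α be the 2-expansion map on [α, α+1]. Then T_α(α + 1) = (1 − α)/(α + 1), this value lies in the open interval (α, 2/(α+4)), and consequently T_α²(α + 1) = (6α − 2)/(1 − α). -/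
theorem stmt_2 (α : ℝ) (h₁ : (Real.sqrt 33 - 5) / 2 < α) (h₂ : α < Real.sqrt 2 - 1) :
    Texp α (α + 1) = (1 - α) / (α + 1) ∧
    (1 - α) / (α + 1) ∈ Set.Ioo α (2 / (α + 4)) ∧
    Texp α (Texp α (α + 1)) = (6 * α - 2) / (1 - α) := by
  have s33 : (5:ℝ) < Real.sqrt 33 := Real.lt_sqrt_of_sq_lt (by norm_num)
  have s33' : Real.sqrt 33 ^ 2 = 33 := Real.sq_sqrt (by norm_num)
  have s2' : Real.sqrt 2 ^ 2 = 2 := Real.sq_sqrt (by norm_num)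
  have s2 : Real.sqrt 2 < 1.42 := by
    rw [Real.sqrt_lt' (by norm_num)]; norm_num
  have a0 : 0 < α := by linarith
  have a1 : α < 0.42 := by linarith
  have p1 : 0 < α ^ 2 + 5 * α - 2 := by nlinarith
  have p2 : α ^ 2 + 2 * α < 1 := by nlinarith
  have b1 : 0 < α + 1 := by linarith
  have b2 : 0 < 1 - α := by linarith
  have b4 : 0 < α + 4 := by linarith
  have f1 : ⌊2 / (α + 1) - α⌋ = 1 := by
    rw [Int.floor_eq_iff]
    push_cast
    constructor
    · rw [le_sub_iff_add_le, le_div_iff₀ b1]; nlinarith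
    · rw [sub_lt_iff_lt_add, div_lt_iff₀ b1]; nlinarith
  have e1 : Texp α (α + 1) = (1 - α) / (α + 1) := by
    rw [Texp, f1]; push_cast; field_simp; ring
  have f2 : ⌊2 / ((1 - α) / (α + 1)) - α⌋ = 4 := by
    rw [Int.floor_eq_iff, div_div_eq_mul_div]
    push_cast
    constructor
    · rw [le_sub_iff_add_le, le_div_iff₀ b2]; nlinarith
    · rw [sub_lt_iff_lt_add, div_lt_iff₀ b2]; nlinarith
  refine ⟨e1, ⟨?_, ?_⟩, ?_⟩
  · rw [lt_div_iff₀ b1]; nlinarith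
  · rw [div_lt_div_iff₀ b1 b4]; nlinarith
  · rw [e1, Texp, f2, div_div_eq_mul_div]; push_cast; field_simp; ring
end

section
/- Let α ∈ ((√33 − 5)/2, (√51 − 6)/3] and let T_α be the 2-expansion map on [α, α+1]. Then T_α³(α) = T_α³(α + 1) = (5 − 13α)/(3α − 1). -/
theorem Texp_eval (α x y z : ℝ) (k : ℤ) (hy : 2 / x = y) (h1 : (k : ℝ) ≤ y - α)
    (h2 : y - α < k + 1) (hz : y - k = z) : Texp α x = z := by
  have : ⌊2 / x - α⌋ = k := by
    rw [hy]; exact Int.floor_eq_iff.mpr ⟨h1, h2⟩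
  rw [Texp, this, hy, hz]

theorem stmt_3 (α : ℝ) (h₁ : (Real.sqrt 33 - 5) / 2 < α) (h₂ : α ≤ (Real.sqrt 51 - 6) / 3) :
    Texp α (Texp α (Texp α α)) = (5 - 13 * α) / (3 * α - 1) ∧
    Texp α (Texp α (Texp α (α + 1))) = (5 - 13 * α) / (3 * α - 1) := by
  have s1 : (5.744:ℝ) < Real.sqrt 33 := Real.lt_sqrt_of_sq_lt (by norm_num)
  have s2 : Real.sqrt 51 < 7.142 := by
    rw [Real.sqrt_lt' (by norm_num)]; norm_num
  have e1 : Real.sqrt 33 ^ 2 = 33 := Real.sq_sqrt (by norm_num)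
  have e2 : Real.sqrt 51 ^ 2 = 51 := Real.sq_sqrt (by norm_num)
  have l : 0.372 < α := by linarith
  have u : α < 0.381 := by linarith
  have q1 : 0 < α^2 + 5*α - 2 := by nlinarith
  have q2 : 3*α^2 + 12*α - 5 ≤ 0 := by nlinarith
  have p0 : 0 < α := by linarith
  have p1 : 0 < 1 - 2*α := by linarith
  have p2 : 0 < 3*α - 1 := by linarith
  have p3 : 0 < 1 - α := by linarith
  have p4 : 0 < α + 1 := by linarith
  have n0 := p0.ne'
  have n1 := p1.ne'
  have n2 := p2.ne'
  have n3 := p3.ne'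
  have n4 := p4.ne'
  have n5 : α * 3 - 1 ≠ 0 := by intro h; linarith
  have n6 : 1 - α * 2 ≠ 0 := by intro h; linarith
  have a1 : Texp α α = 2 * (1 - 2*α) / α := by
    apply Texp_eval α α (2/α) _ 4 rfl
    · rw [le_sub_iff_add_le, le_div_iff₀ p0]; push_cast; nlinarith
    · rw [sub_lt_iff_lt_add, div_lt_iff₀ p0]; push_cast; nlinarith
    · push_cast; field_simp; ring
  have a2 : Texp α (2 * (1 - 2*α) / α) = (3*α-1)/(1-2*α) := by
    apply Texp_eval α _ (α/(1-2*α)) _ 1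
    · field_simp
    · rw [le_sub_iff_add_le, le_div_iff₀ p1]; push_cast; nlinarith
    · rw [sub_lt_iff_lt_add, div_lt_iff₀ p1]; push_cast; nlinarith
    · push_cast; field_simp; ring
  have a3 : Texp α ((3*α-1)/(1-2*α)) = (5 - 13 * α) / (3 * α - 1) := by
    apply Texp_eval α _ (2*(1-2*α)/(3*α-1)) _ 3
    · field_simp
    · rw [le_sub_iff_add_le, le_div_iff₀ p2]; push_cast; nlinarith
    · rw [sub_lt_iff_lt_add, div_lt_iff₀ p2]; push_cast; nlinarith
    · push_cast; field_simp; ring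
  have b1 : Texp α (α+1) = (1-α)/(α+1) := by
    apply Texp_eval α _ (2/(α+1)) _ 1 rfl
    · rw [le_sub_iff_add_le, le_div_iff₀ p4]; push_cast; nlinarith
    · rw [sub_lt_iff_lt_add, div_lt_iff₀ p4]; push_cast; nlinarith
    · push_cast; field_simp; ring
  have b2 : Texp α ((1-α)/(α+1)) = 2*(3*α-1)/(1-α) := by
    apply Texp_eval α _ (2*(α+1)/(1-α)) _ 4
    · field_simp
    · rw [le_sub_iff_add_le, le_div_iff₀ p3]; push_cast; nlinarith
    · rw [sub_lt_iff_lt_add, div_lt_iff₀ p3]; push_cast; nlinarith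
    · push_cast; field_simp; ring
  have b3 : Texp α (2*(3*α-1)/(1-α)) = (5 - 13 * α) / (3 * α - 1) := by
    apply Texp_eval α _ ((1-α)/(3*α-1)) _ 4
    · field_simp
    · rw [le_sub_iff_add_le, le_div_iff₀ p2]; push_cast; nlinarith
    · rw [sub_lt_iff_lt_add, div_lt_iff₀ p2]; push_cast; nlinarith
    · push_cast; field_simp; ring
  exact ⟨by rw [a1, a2, a3], by rw [b1, b2, b3]⟩
end

section
/- Let α ∈ ((√33 − 5)/2, √2 − 1), let T_α be the 2-expansion map on [α, α+1], and set A = (√33 − 5)/2, B = √2 − 1, C = (√33 − 3)/6, D = 2√2 − 2, E = (√33 − 3)/2, F = √2, and H = 1/log((1/32)(3 + 2√2)(7 + √33)(√33 − 5)²). Define f : [α, α+1] → ℝ by f(x) = H·( D/(2 + Dx)·1_{(α, (1−α)/(1+α))}(x) + E/(2 + Ex)·1_{((1−α)/(1+α), (3α−1)/(1−2α))}(x) + F/(2 + Fx)·1_{((3α−1)/(1−2α), α+1)}(x) − A/(2 + Ax)·1_{(α, (6α−2)/(1−α))}(x) − B/(2 + Bx)·1_{((6α−2)/(1−α), (2−4α)/α)}(x)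 − C/(2 + Cx)·1_{((2−4α)/α, α+1)}(x) ). Then the measure μ on [α, α+1] with density f with respect to Lebesgue measure is a T_α-invariant probability measure. -/
open MeasureTheory Set

/-- The invariant density from Theorem `thm:natexonint`, with
`A = (√33-5)/2`, `B = √2-1`, `C = (√33-3)/6`, `D = 2√2-2`, `E = (√33-3)/2`, `F = √2`, and
normalizing constant `H = 1 / log((1/32)(3+2√2)(7+√33)(√33-5)²)`. -/
noncomputable def invDens (α x : ℝ) : ℝ :=
  (1 / Real.log ((1 / 32) * (3 + 2 * Real.sqrt 2) * (7 + Real.sqrt 33) * (Real.sqrt 33 - 5) ^ 2)) *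
    ( indicator (Ioo α ((1 - α) / (1 + α)))
        (fun t => (2 * Real.sqrt 2 - 2) / (2 + (2 * Real.sqrt 2 - 2) * t)) x
    + indicator (Ioo ((1 - α) / (1 + α)) ((3 * α - 1) / (1 - 2 * α)))
        (fun t => ((Real.sqrt 33 - 3) / 2) / (2 + ((Real.sqrt 33 - 3) / 2) * t)) x
    + indicator (Ioo ((3 * α - 1) / (1 - 2 * α)) (α + 1))
        (fun t => Real.sqrt 2 / (2 + Real.sqrt 2 * t)) x
    - indicator (Ioo α ((6 * α - 2) / (1 - α)))
        (fun t => ((Real.sqrt 33 - 5) / 2) / (2 + ((Real.sqrt 33 - 5) / 2) * t)) x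
    - indicator (Ioo ((6 * α - 2) / (1 - α)) ((2 - 4 * α) / α))
        (fun t => (Real.sqrt 2 - 1) / (2 + (Real.sqrt 2 - 1) * t)) x
    - indicator (Ioo ((2 - 4 * α) / α) (α + 1))
        (fun t => ((Real.sqrt 33 - 3) / 6) / (2 + ((Real.sqrt 33 - 3) / 6) * t)) x )

theorem cov_aux (d a b : ℝ) (ha : 0 < d + a) (hab : a < b) (g : ℝ → ENNReal) :
    ∫⁻ x in Ioc (2 / (d + b)) (2 / (d + a)), g x =
      ∫⁻ y in Ico a b, ENNReal.ofReal (2 / (d + y) ^ 2) * g (2 / (d + y)) := by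
  have himg : (fun y : ℝ => 2 / (d + y)) '' Ico a b = Ioc (2 / (d + b)) (2 / (d + a)) := by
    ext x
    simp only [mem_image, mem_Ico, mem_Ioc]
    constructor
    · rintro ⟨y, ⟨h1, h2⟩, rfl⟩
      exact ⟨div_lt_div_of_pos_left (by norm_num) (by linarith) (by linarith),
        div_le_div_of_nonneg_left (by norm_num) ha (by linarith)⟩
    · rintro ⟨h1, h2⟩
      have hx : 0 < x := lt_trans (div_pos two_pos (by linarith)) h1
      rw [div_lt_iff₀ (by linarith)] at h1
      rw [le_div_iff₀ ha] at h2
      refine ⟨2 / x - d, ⟨?_, ?_⟩, ?_⟩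
      · rw [le_sub_iff_add_le, le_div_iff₀ hx]; linarith
      · rw [sub_lt_iff_lt_add, div_lt_iff₀ hx]; linarith
      · field_simp
        ring
  rw [← himg, lintegral_image_eq_lintegral_abs_deriv_mul (f' := fun y => - (2 / (d + y) ^ 2))
    measurableSet_Ico]
  · simp only [abs_neg]
    refine setLIntegral_congr_fun measurableSet_Ico fun y hy => ?_
    have : |2 / (d + y) ^ 2| = 2 / (d + y) ^ 2 := abs_of_nonneg (by positivity)
    simp only [this]
  · intro y hy
    have hy0 : d + y ≠ 0 := by have := hy.1; intro h; linarith
    apply HasDerivAt.hasDerivWithinAt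
    have h := (((hasDerivAt_id' y).const_add d).fun_inv hy0).const_mul 2
    simp only [div_eq_mul_inv]
    exact h.congr_deriv (by ring)
  · intro y hy z hz h
    have h1 := hy.1
    have h2 := hz.1
    have e1 : 0 < d + y := by linarith
    have e2 : 0 < d + z := by linarith
    have h' : 2 / (d + y) = 2 / (d + z) := h
    rw [div_eq_div_iff e1.ne' e2.ne'] at h'
    linarith

theorem split_aux (g : ℝ → ENNReal) (a b c : ℝ) (h1 : a ≤ b) (h2 : b ≤ c) :
    ∫⁻ x in Ioc a c, g x = (∫⁻ x in Ioc a b, g x) + ∫⁻ x in Ioc b c, g x := by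
  rw [← Ioc_union_Ioc_eq_Ioc h1 h2, lintegral_union measurableSet_Ioc]
  exact Set.disjoint_left.2 fun x hx hy => absurd hx.2 (not_le.2 hy.1)

theorem ind3_aux (a p q b x : ℝ) (f1 f2 f3 : ℝ → ℝ) (hpq : p < q)
    (hx1 : a < x) (hx2 : x < b) (hxp : x ≠ p) (hxq : x ≠ q) :
    indicator (Ioo a p) f1 x + indicator (Ioo p q) f2 x + indicator (Ioo q b) f3 x =
      if x < p then f1 x else if x < q then f2 x else f3 x := by
  rcases lt_or_gt_of_ne hxp with h | h
  · rw [indicator_of_mem (show x ∈ Ioo a p from ⟨hx1, h⟩),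
      indicator_of_notMem (fun k => by linarith [k.1] : x ∉ Ioo p q),
      indicator_of_notMem (fun k => by linarith [k.1] : x ∉ Ioo q b), if_pos h]; ring
  · rw [indicator_of_notMem (fun k => by linarith [k.2] : x ∉ Ioo a p), if_neg (by linarith)]
    rcases lt_or_gt_of_ne hxq with h' | h'
    · rw [indicator_of_mem (show x ∈ Ioo p q from ⟨h, h'⟩),
        indicator_of_notMem (fun k => by linarith [k.1] : x ∉ Ioo q b), if_pos h']; ring
    · rw [indicator_of_notMem (fun k => by linarith [k.2] : x ∉ Ioo p q),
        indicator_of_mem (show x ∈ Ioo q b from ⟨h', hx2⟩), if_neg (by linarith)]; ring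

/-- the six term bracket as a difference of two step functions -/
noncomputable def UL (A B C D p q r s x : ℝ) : ℝ :=
  (if x < p then 1 / (x + (2 + B)) else if x < q then 1 / (x + (1 + C)) else 1 / (x + (1 + B)))
  - (if x < r then 1 / (x + (5 + A)) else if x < s then 1 / (x + (4 + D)) else 1 / (x + (4 + A)))

noncomputable def kk (A B w u : ℝ) : ℝ := if u < w + 1 then 1 / (u + B) else 1 / (u + A)

theorem term_aux (u c k : ℝ) (hu : 0 < u) (hc : 0 < c) (hck : c * k = 2) :
    2 / u ^ 2 * (1 / (2 / u + k)) = 1 / u - 1 / (u + c) := by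
  have hk : k = 2 / c := by field_simp; linarith
  subst hk
  field_simp
  ring

theorem two_div_lt (u v : ℝ) (hu : 0 < u) (hv : 0 < v) : 2 / u < 2 / v ↔ v < u := by
  rw [div_lt_div_iff_of_pos_left two_pos hu hv]

theorem L1_aux (A B C D p q r s w u : ℝ) (hA : 0 < A) (hB : 0 < B) (hC : 0 < C) (hD : 0 < D)
    (kA : A * (5 + A) = 2) (kB : B * (4 + D) = 2) (kC : C * (4 + A) = 2)
    (kD : D * (2 + B) = 2) (kE : (A + 1) * (1 + C) = 2) (kF : (B + 1) * (1 + B) = 2)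
    (hp : p = 2 / (4 + r)) (hq : q = 2 / w) (hr : r = 2 / (w + 1)) (hs : s = 2 / (1 + q))
    (hw : 0 < w) (hwr : w < 4 + r) (hqw : q < w) (hu : 0 < u)
    (n1 : u ≠ 1 + q) (n2 : u ≠ w) (n3 : u ≠ w + 1) (n4 : u ≠ 4 + r) :
    2 / u ^ 2 * UL A B C D p q r s (2 / u) =
      (if u < 1 + q then 1 / (u + C) else kk A B w u)
      - (if u < 4 + r then kk A B w (u + 1) else 1 / (u + D)) := by
  have q0 : 0 < q := by rw [hq]; positivity
  have r0 : 0 < r := by rw [hr]; positivity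
  have e1 : 2 / u < p ↔ 4 + r < u := by rw [hp]; exact two_div_lt _ _ hu (by linarith)
  have e2 : 2 / u < q ↔ w < u := by rw [hq]; exact two_div_lt _ _ hu (by linarith)
  have e3 : 2 / u < r ↔ w + 1 < u := by rw [hr]; exact two_div_lt _ _ hu (by linarith)
  have e4 : 2 / u < s ↔ 1 + q < u := by rw [hs]; exact two_div_lt _ _ hu (by linarith)
  have tA := term_aux u A (5 + A) hu hA kA
  have tB := term_aux u B (4 + D) hu hB kB
  have tC := term_aux u C (4 + A) hu hC kC
  have tD := term_aux u D (2 + B) hu hD kD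
  have tE := term_aux u (A + 1) (1 + C) hu (by linarith) kE
  have tF := term_aux u (B + 1) (1 + B) hu (by linarith) kF
  have a1 : u + 1 + A = u + (A + 1) := by ring
  have a2 : u + 1 + B = u + (B + 1) := by ring
  have hU : 2 / u ^ 2 * (if 2 / u < p then 1 / (2 / u + (2 + B)) else if 2 / u < q then
      1 / (2 / u + (1 + C)) else 1 / (2 / u + (1 + B))) =
      1 / u - (if u < 4 + r then kk A B w (u + 1) else 1 / (u + D)) := by
    simp only [e1, e2, kk, add_lt_add_iff_right, a1, a2]
    rcases lt_or_gt_of_ne n4 with h | h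
    · rw [if_neg (by linarith), if_pos h]
      rcases lt_or_gt_of_ne n2 with h' | h'
      · rw [if_neg (by linarith), if_pos h', tF]
      · rw [if_pos h', if_neg (by linarith), tE]
    · rw [if_pos h, if_neg (by linarith), tD]
  have hL : 2 / u ^ 2 * (if 2 / u < r then 1 / (2 / u + (5 + A)) else if 2 / u < s then
      1 / (2 / u + (4 + D)) else 1 / (2 / u + (4 + A))) =
      1 / u - (if u < 1 + q then 1 / (u + C) else kk A B w u) := by
    simp only [e3, e4, kk]
    rcases lt_or_gt_of_ne n1 with h | h
    · rw [if_neg (by linarith), if_neg (by linarith), if_pos h, tC]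
    · rw [if_neg (by linarith : ¬ u < 1 + q)]
      rcases lt_or_gt_of_ne n3 with h' | h'
      · rw [if_neg (by linarith), if_pos h, if_pos h', tB]
      · rw [if_pos h', if_neg (by linarith), tA]
  rw [UL, mul_sub, hU, hL]
  ring

theorem L2_aux (α A B C D p q r s w y : ℝ)
    (hp : p = 2 / (4 + r)) (hq : q = 2 / w) (hr : r = 2 / (w + 1)) (hs : s = 2 / (1 + q))
    (hA : 0 < A) (hB : 0 < B) (hC : 0 < C) (hD : 0 < D)
    (kA : A * (5 + A) = 2) (kB : B * (4 + D) = 2) (kC : C * (4 + A) = 2)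
    (kD : D * (2 + B) = 2) (kE : (A + 1) * (1 + C) = 2) (kF : (B + 1) * (1 + B) = 2)
    (hα : 0 < α) (hαp : α < p) (hpq : p < q) (hqα : q < α + 1)
    (hαr : α < r) (hrs : r < s) (hsα : s < α + 1)
    (hw : α + 1 < w) (hwr : w < 4 + r) (w1 : 1 + p < w) (w2 : w < 4 + α) (w3 : w + 1 < 4 + s)
    (y1 : α < y) (y2 : y < α + 1)
    (hb : ∀ d ∈ ({1, 2, 3, 4} : Set ℝ), d + y ∉ ({1 + q, w, w + 1, 4 + r} : Set ℝ))
    (np : y ≠ p) (ns : y ≠ s) :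
    (if p ≤ y then 2 / (1 + y) ^ 2 * UL A B C D p q r s (2 / (1 + y)) else 0)
    + 2 / (2 + y) ^ 2 * UL A B C D p q r s (2 / (2 + y))
    + 2 / (3 + y) ^ 2 * UL A B C D p q r s (2 / (3 + y))
    + (if y < s then 2 / (4 + y) ^ 2 * UL A B C D p q r s (2 / (4 + y)) else 0)
      = UL A B C D p q r s y := by
  have key : ∀ d ∈ ({1, 2, 3, 4} : Set ℝ), 0 < d →
      2 / (d + y) ^ 2 * UL A B C D p q r s (2 / (d + y)) =
      (if d + y < 1 + q then 1 / (d + y + C) else kk A B w (d + y))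
      - (if d + y < 4 + r then kk A B w (d + y + 1) else 1 / (d + y + D)) := by
    intro d hd hd0
    have := hb d hd
    simp only [mem_insert_iff, mem_singleton_iff, not_or] at this
    exact L1_aux A B C D p q r s w (d + y) hA hB hC hD kA kB kC kD kE kF hp hq hr hs
      (by linarith) hwr (by linarith) (by linarith) this.1 this.2.1 this.2.2.1 this.2.2.2
  rw [key 1 (by simp) (by norm_num), key 2 (by simp) (by norm_num), key 3 (by simp) (by norm_num),
    key 4 (by simp) (by norm_num)]
  rw [if_neg (by linarith : ¬ 2 + y < 1 + q), if_neg (by linarith : ¬ 3 + y < 1 + q),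
    if_neg (by linarith : ¬ 4 + y < 1 + q), if_pos (by linarith : 1 + y < 4 + r),
    if_pos (by linarith : 2 + y < 4 + r), if_pos (by linarith : 3 + y < 4 + r)]
  rw [show 1 + y + 1 = 2 + y by ring, show 2 + y + 1 = 3 + y by ring,
    show 3 + y + 1 = 4 + y by ring, show 4 + y + 1 = 5 + y by ring]
  have b1 := hb 1 (by simp)
  have b4 := hb 4 (by simp)
  simp only [mem_insert_iff, mem_singleton_iff, not_or] at b1 b4
  have nq : y ≠ q := fun h => b1.1 (by rw [h])
  have nr : y ≠ r := fun h => b4.2.2.2 (by rw [h])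
  have hU : (if p ≤ y then (if 1 + y < 1 + q then 1 / (1 + y + C) else kk A B w (1 + y))
      - kk A B w (2 + y) else 0) + kk A B w (2 + y) =
      (if y < p then 1 / (y + (2 + B)) else if y < q then 1 / (y + (1 + C))
        else 1 / (y + (1 + B))) := by
    rcases lt_or_gt_of_ne np with h | h
    · rw [if_neg (by linarith), if_pos h, kk, if_pos (by linarith)]
      rw [zero_add]; congr 1; ring
    · rw [if_pos h.le, if_neg (by linarith : ¬ y < p)]
      rcases lt_or_gt_of_ne nq with h' | h'
      · rw [if_pos (by linarith), if_pos h', show 1 + y + C = y + (1 + C) by ring]; ring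
      · rw [if_neg (by linarith), if_neg (by linarith), show kk A B w (1 + y) = 1 / (y + (1 + B)) by
          rw [kk, if_pos (by linarith)]; congr 1; ring]
        ring
  have hL : (if y < s then kk A B w (4 + y) - (if 4 + y < 4 + r then kk A B w (5 + y)
      else 1 / (4 + y + D)) else 0) - kk A B w (4 + y) =
      - (if y < r then 1 / (y + (5 + A)) else if y < s then 1 / (y + (4 + D))
        else 1 / (y + (4 + A))) := by
    rcases lt_or_gt_of_ne nr with h | h
    · rw [if_pos (by linarith), if_pos (by linarith), if_pos h,
        show kk A B w (5 + y) = 1 / (y + (5 + A)) by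
          rw [kk, if_neg (by linarith)]; congr 1; ring]
      ring
    · rw [if_neg (by linarith : ¬ 4 + y < 4 + r), if_neg (by linarith : ¬ y < r)]
      rcases lt_or_gt_of_ne ns with h' | h'
      · rw [if_pos h', if_pos h', show 4 + y + D = y + (4 + D) by ring]; ring
      · rw [if_neg (by linarith), if_neg (by linarith),
          show kk A B w (4 + y) = 1 / (y + (4 + A)) by
            rw [kk, if_neg (by linarith)]; congr 1; ring]
        ring
  rw [UL]
  linarith

theorem alpha_facts (α : ℝ) (h₁ : (Real.sqrt 33 - 5) / 2 < α) (h₂ : α < Real.sqrt 2 - 1) :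
    1 / 3 < α ∧ α < 1 / 2 ∧ 0 < α ^ 2 + 5 * α - 2 ∧ α ^ 2 + 2 * α - 1 < 0 := by
  have v2 : Real.sqrt 33 ^ 2 = 33 := Real.sq_sqrt (by norm_num)
  have t2 : Real.sqrt 2 ^ 2 = 2 := Real.sq_sqrt (by norm_num)
  have v0 : 5.7 < Real.sqrt 33 := Real.lt_sqrt_of_sq_lt (by norm_num)
  have t0 : Real.sqrt 2 < 1.5 := by rw [Real.sqrt_lt' (by norm_num)]; norm_num
  have t1 : 0 < Real.sqrt 2 := by positivity
  refine ⟨by linarith, by linarith, by nlinarith, by nlinarith⟩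

theorem order_facts (α p q r s w : ℝ) (a1 : 1 / 3 < α) (a2 : α < 1 / 2)
    (a3 : 0 < α ^ 2 + 5 * α - 2) (a4 : α ^ 2 + 2 * α - 1 < 0)
    (hp : p = (1 - α) / (1 + α)) (hq : q = (3 * α - 1) / (1 - 2 * α))
    (hr : r = (6 * α - 2) / (1 - α)) (hs : s = (2 - 4 * α) / α)
    (hw : w = 2 * (1 - 2 * α) / (3 * α - 1)) :
    (p = 2 / (4 + r) ∧ q = 2 / w ∧ r = 2 / (w + 1) ∧ s = 2 / (1 + q)) ∧
    (α < p ∧ p < q ∧ q < α + 1) ∧ (α < r ∧ r < s ∧ s < α + 1) ∧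
    (α + 1 < w ∧ w < 4 + r ∧ 1 + p < w ∧ w < 4 + α ∧ w + 1 < 4 + s) ∧
    α + 1 = 2 / (1 + p) ∧ α = 2 / (4 + s) := by
  have b1 : 0 < 3 * α - 1 := by linarith
  have b2 : 0 < 1 - 2 * α := by linarith
  have b3 : 0 < 1 - α := by linarith
  have b4 : 0 < 1 + α := by linarith
  have b5 : 0 < α := by linarith
  have c1 := b1.ne'
  have c2 := b2.ne'
  have e1 : 4 + r = 2 * (1 + α) / (1 - α) := by rw [hr]; field_simp; ring
  have e2 : w + 1 = (1 - α) / (3 * α - 1) := by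
    rw [hw, div_add_one c1]; congr 1; ring
  have e3 : 1 + q = α / (1 - 2 * α) := by
    rw [hq, eq_div_iff c2, add_mul, div_mul_cancel₀ _ c2]; ring
  have e4 : 1 + p = 2 / (1 + α) := by rw [hp]; field_simp; ring
  have e5 : 4 + s = 2 / α := by rw [hs]; field_simp; ring
  refine ⟨⟨?_, ?_, ?_, ?_⟩, ⟨?_, ?_, ?_⟩, ⟨?_, ?_, ?_⟩, ⟨?_, ?_, ?_, ?_, ?_⟩, ?_, ?_⟩
  · rw [e1, hp]; field_simp
  · rw [hw, hq]; field_simp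
  · rw [e2, hr]; field_simp; ring
  · rw [e3, hs]; field_simp; ring
  · rw [hp, lt_div_iff₀ b4]; nlinarith
  · rw [hp, hq, div_lt_div_iff₀ b4 b2]; nlinarith
  · rw [hq, div_lt_iff₀ b2]; nlinarith
  · rw [hr, lt_div_iff₀ b3]; nlinarith
  · rw [hr, hs, div_lt_div_iff₀ b3 b5]; nlinarith
  · rw [hs, div_lt_iff₀ b5]; nlinarith
  · rw [hw, lt_div_iff₀ b1]; nlinarith
  · rw [hw, e1, div_lt_div_iff₀ b1 b3]; nlinarith
  · rw [hw, e4, div_lt_div_iff₀ b4 b1]; nlinarith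
  · rw [hw, div_lt_iff₀ b1]; nlinarith
  · rw [e2, e5, div_lt_div_iff₀ b1 b5]; nlinarith
  · rw [e4]; field_simp; ring
  · rw [e5]; field_simp

theorem frac_aux (c k x : ℝ) (hc : 0 < c) (hk : 0 < k) (hx : 0 < x) (h : c * k = 2) :
    c / (2 + c * x) = 1 / (x + k) := by
  rw [← h]; field_simp; ring

theorem K_gt_one : 1 < (1 / 32) * (3 + 2 * Real.sqrt 2) * (7 + Real.sqrt 33) *
    (Real.sqrt 33 - 5) ^ 2 := by
  have v2 : Real.sqrt 33 ^ 2 = 33 := Real.sq_sqrt (by norm_num)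
  have v0 : Real.sqrt 33 < 5.75 := by rw [Real.sqrt_lt' (by norm_num)]; norm_num
  have t0 : 1.4 < Real.sqrt 2 := Real.lt_sqrt_of_sq_lt (by norm_num)
  have e : (1 / 32) * (3 + 2 * Real.sqrt 2) * (7 + Real.sqrt 33) * (Real.sqrt 33 - 5) ^ 2
      = (3 + 2 * Real.sqrt 2) * ((19 - 3 * Real.sqrt 33) / 8) := by
    linear_combination (1 / 32) * (3 + 2 * Real.sqrt 2) * (Real.sqrt 33 - 3) * v2
  rw [e]
  nlinarith

theorem dens_eq (α p q r s x : ℝ) (hα : 0 < α)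
    (hp : p = (1 - α) / (1 + α)) (hq : q = (3 * α - 1) / (1 - 2 * α))
    (hr : r = (6 * α - 2) / (1 - α)) (hs : s = (2 - 4 * α) / α)
    (hpq : p < q) (hrs : r < s) (x1 : α < x) (x2 : x < α + 1)
    (np : x ≠ p) (nq : x ≠ q) (nr : x ≠ r) (ns : x ≠ s) :
    invDens α x = (1 / Real.log ((1 / 32) * (3 + 2 * Real.sqrt 2) * (7 + Real.sqrt 33) *
      (Real.sqrt 33 - 5) ^ 2)) * UL ((Real.sqrt 33 - 5) / 2) (Real.sqrt 2 - 1)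
      ((Real.sqrt 33 - 3) / 6) (2 * Real.sqrt 2 - 2) p q r s x := by
  have v2 : Real.sqrt 33 ^ 2 = 33 := Real.sq_sqrt (by norm_num)
  have t2 : Real.sqrt 2 ^ 2 = 2 := Real.sq_sqrt (by norm_num)
  have v0 : 5.7 < Real.sqrt 33 := Real.lt_sqrt_of_sq_lt (by norm_num)
  have t0 : 1.4 < Real.sqrt 2 := Real.lt_sqrt_of_sq_lt (by norm_num)
  have x0 : 0 < x := by linarith
  rw [invDens, ← hp, ← hq, ← hr, ← hs, sub_sub, sub_sub, ← add_assoc,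
    ind3_aux _ _ _ _ _ _ _ _ hpq x1 x2 np nq, ind3_aux _ _ _ _ _ _ _ _ hrs x1 x2 nr ns, UL]
  rw [frac_aux ((Real.sqrt 33 - 5) / 2) (5 + (Real.sqrt 33 - 5) / 2) x (by linarith) (by linarith)
      x0 (by nlinarith),
    frac_aux (Real.sqrt 2 - 1) (4 + (2 * Real.sqrt 2 - 2)) x (by linarith) (by linarith)
      x0 (by nlinarith),
    frac_aux ((Real.sqrt 33 - 3) / 6) (4 + (Real.sqrt 33 - 5) / 2) x (by linarith) (by linarith)
      x0 (by nlinarith),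
    frac_aux (2 * Real.sqrt 2 - 2) (2 + (Real.sqrt 2 - 1)) x (by linarith) (by linarith)
      x0 (by nlinarith),
    frac_aux ((Real.sqrt 33 - 3) / 2) (1 + (Real.sqrt 33 - 3) / 6) x (by linarith) (by linarith)
      x0 (by nlinarith),
    frac_aux (Real.sqrt 2) (1 + (Real.sqrt 2 - 1)) x (by linarith) (by linarith)
      x0 (by nlinarith)]

theorem UL_nonneg (A B C D p q r s x : ℝ) (hx : 0 < x) (hA : 0 < A) (hB : 0 < B) (hC : 0 < C)
    (hD : 0 < D) (hB1 : B < 1) (hC1 : C < 1) : 0 ≤ UL A B C D p q r s x := by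
  rw [UL, sub_nonneg]
  have h1 : (if x < r then 1 / (x + (5 + A)) else if x < s then 1 / (x + (4 + D))
      else 1 / (x + (4 + A))) ≤ 1 / (x + 4) := by
    split_ifs <;> exact one_div_le_one_div_of_le (by linarith) (by linarith)
  have h2 : 1 / (x + 4) ≤ (if x < p then 1 / (x + (2 + B)) else if x < q then 1 / (x + (1 + C))
      else 1 / (x + (1 + B))) := by
    split_ifs <;> exact one_div_le_one_div_of_le (by linarith) (by linarith)
  exact h1.trans h2

theorem Texp_meas (α : ℝ) : Measurable (Texp α) := by
  unfold Texp
  have h : Measurable fun x : ℝ => 2 / x := measurable_const.div measurable_id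
  exact h.sub ((measurable_from_top (f := fun n : ℤ => (n : ℝ))).comp
    (Int.measurable_floor.comp (h.sub_const α)))

theorem invDens_meas (α : ℝ) : Measurable (invDens α) := by
  unfold invDens
  have key : ∀ c a b : ℝ, Measurable (indicator (Ioo a b) (fun t : ℝ => c / (2 + c * t))) :=
    fun c a b => Measurable.indicator (by fun_prop) measurableSet_Ioo
  exact ((((((key _ _ _).add (key _ _ _)).add (key _ _ _)).sub (key _ _ _)).sub
    (key _ _ _)).sub (key _ _ _)).const_mul _

theorem Texp_branch (α y : ℝ) (d : ℕ) (hy : α ≤ y) (hy2 : y < α + 1) (h0 : 0 < (d : ℝ) + y) :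
    Texp α (2 / (d + y)) = y := by
  have e : 2 / (2 / ((d : ℝ) + y)) = d + y := by field_simp
  have f : ⌊(d : ℝ) + y - α⌋ = (d : ℤ) := by
    rw [Int.floor_eq_iff]; push_cast; constructor <;> linarith
  rw [Texp, e, f]; push_cast; ring

theorem int_piece (α a b c : ℝ) (hα : 0 < α) (h1 : α ≤ a) (h2 : a ≤ b) (h3 : b ≤ α + 1)
    (hc : 0 < c) :
    IntegrableOn (indicator (Ioo a b) (fun t : ℝ => c / (2 + c * t))) (Icc α (α + 1)) volume ∧
    ∫ x in Icc α (α + 1), indicator (Ioo a b) (fun t : ℝ => c / (2 + c * t)) x =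
      Real.log (2 + c * b) - Real.log (2 + c * a) := by
  have hcont : ContinuousOn (fun t : ℝ => c / (2 + c * t)) (Icc α (α + 1)) := by
    apply ContinuousOn.div (by fun_prop) (by fun_prop)
    intro x hx
    have := hx.1
    have : 0 < c * x := mul_pos hc (by linarith)
    positivity
  have hss : Ioo a b ⊆ Icc α (α + 1) :=
    fun x hx => ⟨by linarith [hx.1], by linarith [hx.2]⟩
  have hint := hcont.integrableOn_Icc (μ := volume)
  constructor
  · exact hint.indicator measurableSet_Ioo
  · rw [setIntegral_indicator measurableSet_Ioo, inter_eq_right.2 hss,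
      ← integral_Ioc_eq_integral_Ioo, ← intervalIntegral.integral_of_le h2]
    have hsub : uIcc a b ⊆ Icc α (α + 1) := by
      rw [uIcc_of_le h2]; exact Icc_subset_Icc h1 h3
    apply intervalIntegral.integral_eq_sub_of_hasDerivAt
      (f := fun x => Real.log (2 + c * x)) 
    · intro x hx
      have hx' := (hsub hx).1
      have : 0 < c * x := mul_pos hc (by linarith)
      have h := (((hasDerivAt_id x).const_mul c).const_add 2).log (by simp only [id]; positivity)
      simpa using h
    · exact (hcont.mono hsub).intervalIntegrable

theorem six_aux (x1 x2 x3 x4 x5 x6 c1 c2 c3 c4 c5 c6 y1 y2 y3 y4 y5 y6 K : ℝ)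
    (m1 : x1 = c1 * y1) (m2 : x2 = c2 * y2) (m3 : x3 = c3 * y3) (m4 : x4 = c4 * y4)
    (m5 : x5 = c5 * y5) (m6 : x6 = c6 * y6) (hK : K = c1 * c2 * c3 * c4 * c5 * c6) :
    x1 * x2 * x3 * x4 * x5 * x6 = K * (y1 * y2 * y3 * y4 * y5 * y6) := by
  subst m1 m2 m3 m4 m5 m6 hK
  ring

theorem prod_aux (α p q r s t v : ℝ) (a1 : 1 / 3 < α) (a2 : α < 1 / 2)
    (t2 : t ^ 2 = 2) (v2 : v ^ 2 = 33) (t0 : 1 < t) (v0 : 5 < v)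
    (hp : p = (1 - α) / (1 + α)) (hq : q = (3 * α - 1) / (1 - 2 * α))
    (hr : r = (6 * α - 2) / (1 - α)) (hs : s = (2 - 4 * α) / α) :
    (2 + (2 * t - 2) * p) * (2 + (v - 3) / 2 * q) * (2 + t * (α + 1)) *
      (2 + (v - 5) / 2 * α) * (2 + (t - 1) * r) * (2 + (v - 3) / 6 * s) =
    ((1 / 32) * (3 + 2 * t) * (7 + v) * (v - 5) ^ 2) *
    ((2 + (2 * t - 2) * α) * (2 + (v - 3) / 2 * p) * (2 + t * q) *
      (2 + (v - 5) / 2 * r) * (2 + (t - 1) * s) * (2 + (v - 3) / 6 * (α + 1))) := by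
  have b2 : 0 < 1 - 2 * α := by linarith
  have b3 : 0 < 1 - α := by linarith
  have b4 : 0 < 1 + α := by linarith
  have b5 : 0 < α := by linarith
  have m1 : 2 + (2 * t - 2) * p = t / (1 + α) * (2 + (2 * t - 2) * α) := by
    rw [hp]; field_simp; linear_combination (- α) * t2
  have m2 : 2 + (v - 3) / 2 * q =
      (7 - v) / (1 + v) * (1 + α) / (1 - 2 * α) * (2 + (v - 3) / 2 * p) := by
    rw [hp, hq]; field_simp; linear_combination (2 * α) * v2
  have m3 : 2 + t * (α + 1) = ((3 + 2 * t) * (1 - 2 * α)) * (2 + t * q) := by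
    rw [hq]; field_simp; linear_combination (2 - 6 * α) * t2
  have m4 : 2 + (v - 5) / 2 * α = 2 / (7 - v) * (1 - α) * (2 + (v - 5) / 2 * r) := by
    have : v < 7 := by nlinarith
    have : 7 - v ≠ 0 := by linarith
    rw [hr]; field_simp; linear_combination (- α) * v2
  have m5 : 2 + (t - 1) * r = t * α / (1 - α) * (2 + (t - 1) * s) := by
    rw [hr, hs]; field_simp; linear_combination (4 * α - 2) * t2
  have m6 : 2 + (v - 3) / 6 * s =
      2 * (v - 3) / (v + 9) / α * (2 + (v - 3) / 6 * (α + 1)) := by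
    rw [hs]; field_simp; linear_combination (-6 * α) * v2
  have hK : (1 / 32) * (3 + 2 * t) * (7 + v) * (v - 5) ^ 2 =
      t / (1 + α) * ((7 - v) / (1 + v) * (1 + α) / (1 - 2 * α)) * ((3 + 2 * t) * (1 - 2 * α)) *
      (2 / (7 - v) * (1 - α)) * (t * α / (1 - α)) * (2 * (v - 3) / (v + 9) / α) := by
    have : v < 7 := by nlinarith
    have : 7 - v ≠ 0 := by linarith
    have e : (1 / 32) * (3 + 2 * t) * (7 + v) * (v - 5) ^ 2
        = (3 + 2 * t) * ((19 - 3 * v) / 8) := by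
      linear_combination (1 / 32) * (3 + 2 * t) * (v - 3) * v2
    have e2 : (19 - 3 * v) / 8 = 8 * (v - 3) / ((1 + v) * (v + 9)) := by
      rw [div_eq_div_iff (by norm_num) (by positivity)]
      linear_combination (-3 * v - 11) * v2
    rw [e, e2, show (8 : ℝ) = 4 * t ^ 2 by rw [t2]; norm_num]
    field_simp
    ring
  exact six_aux _ _ _ _ _ _ _ _ _ _ _ _ _ _ _ _ _ _ _ m1 m2 m3 m4 m5 m6 hK

theorem prob_aux (α : ℝ) (h₁ : (Real.sqrt 33 - 5) / 2 < α) (h₂ : α < Real.sqrt 2 - 1) :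
    IntegrableOn (invDens α) (Icc α (α + 1)) volume ∧
      ∫ x in Icc α (α + 1), invDens α x = 1 := by
  obtain ⟨a1, a2, a3, a4⟩ := alpha_facts α h₁ h₂
  obtain ⟨p, hp⟩ : ∃ p, p = (1 - α) / (1 + α) := ⟨_, rfl⟩
  obtain ⟨q, hq⟩ : ∃ q, q = (3 * α - 1) / (1 - 2 * α) := ⟨_, rfl⟩
  obtain ⟨r, hr⟩ : ∃ r, r = (6 * α - 2) / (1 - α) := ⟨_, rfl⟩
  obtain ⟨s, hs⟩ : ∃ s, s = (2 - 4 * α) / α := ⟨_, rfl⟩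
  obtain ⟨-, ⟨o1, o2, o3⟩, ⟨o4, o5, o6⟩, -⟩ :=
    order_facts α p q r s _ a1 a2 a3 a4 hp hq hr hs rfl
  have v2 : Real.sqrt 33 ^ 2 = 33 := Real.sq_sqrt (by norm_num)
  have t2 : Real.sqrt 2 ^ 2 = 2 := Real.sq_sqrt (by norm_num)
  have v0 : 5.7 < Real.sqrt 33 := Real.lt_sqrt_of_sq_lt (by norm_num)
  have t0 : 1.4 < Real.sqrt 2 := Real.lt_sqrt_of_sq_lt (by norm_num)
  have hprod := prod_aux α p q r s (Real.sqrt 2) (Real.sqrt 33) a1 a2 t2 v2 (by linarith)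
    (by linarith) hp hq hr hs
  have hK := Real.log_pos K_gt_one
  have hK0 := lt_trans one_pos K_gt_one
  unfold invDens
  rw [← hp, ← hq, ← hr, ← hs]
  generalize (1 / 32) * (3 + 2 * Real.sqrt 2) * (7 + Real.sqrt 33) *
    (Real.sqrt 33 - 5) ^ 2 = K at *
  have hD : 0 < 2 * Real.sqrt 2 - 2 := by linarith
  have hE : 0 < (Real.sqrt 33 - 3) / 2 := by linarith
  have hF : 0 < Real.sqrt 2 := by linarith
  have hA : 0 < (Real.sqrt 33 - 5) / 2 := by linarith
  have hB : 0 < Real.sqrt 2 - 1 := by linarith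
  have hC : 0 < (Real.sqrt 33 - 3) / 6 := by linarith
  generalize 2 * Real.sqrt 2 - 2 = D at *
  generalize (Real.sqrt 33 - 3) / 2 = E at *
  generalize (Real.sqrt 33 - 5) / 2 = A at *
  generalize Real.sqrt 2 - 1 = B at *
  generalize (Real.sqrt 33 - 3) / 6 = C at *
  generalize Real.sqrt 2 = F at *
  have α0 : 0 < α := by linarith
  have p0 : 0 < p := by linarith
  have q0 : 0 < q := by linarith
  have r0 : 0 < r := by linarith
  have s0 : 0 < s := by linarith
  obtain ⟨i1, j1⟩ := int_piece α α p D α0 le_rfl (by linarith) (by linarith) hD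
  obtain ⟨i2, j2⟩ := int_piece α p q E α0 (by linarith) (by linarith) (by linarith) hE
  obtain ⟨i3, j3⟩ := int_piece α q (α + 1) F α0 (by linarith) (by linarith) (by linarith) hF
  obtain ⟨i4, j4⟩ := int_piece α α r A α0 le_rfl (by linarith) (by linarith) hA
  obtain ⟨i5, j5⟩ := int_piece α r s B α0 (by linarith) (by linarith) (by linarith) hB
  obtain ⟨i6, j6⟩ := int_piece α s (α + 1) C α0 (by linarith) (by linarith) (by linarith) hC
  have i12 := i1.add i2
  have i123 := i12.add i3
  have i1234 := i123.sub i4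
  have i12345 := i1234.sub i5
  constructor
  · exact (i12345.sub i6).const_mul _
  · rw [integral_const_mul]
    have e6 := integral_sub i12345 i6
    have e5 := integral_sub i1234 i5
    have e4 := integral_sub i123 i4
    have e3 := integral_add i12 i3
    have e2 := integral_add i1 i2
    simp only [Pi.add_apply, Pi.sub_apply] at e2 e3 e4 e5 e6
    rw [e6, e5, e4, e3, e2, j1, j2, j3, j4, j5, j6]
    have hl := congrArg Real.log hprod
    repeat rw [Real.log_mul (by positivity) (by positivity)] at hl
    rw [one_div, inv_mul_eq_one₀ hK.ne']
    linarith

theorem piece_aux (α a b : ℝ) (d : ℕ) (S : Set ℝ) (hS : MeasurableSet S) (hα : 0 < α)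
    (h1 : α ≤ a) (hab : a < b) (h2 : b ≤ α + 1) :
    ∫⁻ x in Ioc (2 / (d + b)) (2 / (d + a)),
      (Texp α ⁻¹' S).indicator (fun x => ENNReal.ofReal (invDens α x)) x =
    ∫⁻ y in Ico α (α + 1), S.indicator (fun y => (Ico a b).indicator (fun y =>
      ENNReal.ofReal (2 / (d + y) ^ 2 * invDens α (2 / (d + y)))) y) y := by
  have d0 : (0 : ℝ) ≤ d := Nat.cast_nonneg d
  have hss : Ico a b ⊆ Ico α (α + 1) := Ico_subset_Ico h1 h2
  rw [cov_aux _ _ _ (by linarith) hab]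
  have : ∀ y, S.indicator (fun y => (Ico a b).indicator (fun y =>
      ENNReal.ofReal (2 / (d + y) ^ 2 * invDens α (2 / (d + y)))) y) y =
      (Ico a b).indicator (fun y => S.indicator (fun y =>
      ENNReal.ofReal (2 / (d + y) ^ 2 * invDens α (2 / (d + y)))) y) y := by
    intro y
    by_cases k1 : y ∈ S <;> by_cases k2 : y ∈ Ico a b <;> simp [k1, k2]
  simp only [this]
  rw [setLIntegral_indicator measurableSet_Ico, inter_eq_left.2 hss]
  refine setLIntegral_congr_fun measurableSet_Ico fun y hy => ?_
  have hy' := hss hy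
  have hT := Texp_branch α y d hy'.1 hy'.2 (by linarith [hy'.1])
  by_cases k : y ∈ S
  · rw [indicator_of_mem (by rw [mem_preimage, hT]; exact k), indicator_of_mem k,
      ENNReal.ofReal_mul (by positivity)]
  · rw [indicator_of_notMem (by rw [mem_preimage, hT]; exact k), indicator_of_notMem k, mul_zero]

theorem bad_finite (p q r s w : ℝ) : ∀ᵐ y : ℝ, 
    (∀ d ∈ ({1, 2, 3, 4} : Set ℝ), d + y ∉ ({1 + p, 1 + q, w, w + 1, 4 + r, 4 + s} : Set ℝ)) := by
  rw [ae_ball_iff (Set.toFinite ({1, 2, 3, 4} : Set ℝ)).countable]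
  intro d _
  have hf : ({1 + p, 1 + q, w, w + 1, 4 + r, 4 + s} : Set ℝ).Finite := by simp
  have h0 : volume ((fun y => d + y) ⁻¹' ({1 + p, 1 + q, w, w + 1, 4 + r, 4 + s} : Set ℝ)) = 0 :=
    (hf.preimage (add_right_injective d).injOn).measure_zero _
  exact measure_eq_zero_iff_ae_notMem.1 h0

theorem subset_aux (p q r s w : ℝ) : ({1 + q, w, w + 1, 4 + r} : Set ℝ) ⊆
    ({1 + p, 1 + q, w, w + 1, 4 + r, 4 + s} : Set ℝ) := by
  intro x hx
  simp only [mem_insert_iff, mem_singleton_iff] at hx ⊢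
  tauto

theorem const_aux (t v : ℝ) (t2 : t ^ 2 = 2) (v2 : v ^ 2 = 33) :
    (v - 5) / 2 * (5 + (v - 5) / 2) = 2 ∧ (t - 1) * (4 + (2 * t - 2)) = 2 ∧
    (v - 3) / 6 * (4 + (v - 5) / 2) = 2 ∧ (2 * t - 2) * (2 + (t - 1)) = 2 ∧
    ((v - 5) / 2 + 1) * (1 + (v - 3) / 6) = 2 ∧ ((t - 1) + 1) * (1 + (t - 1)) = 2 := by
  refine ⟨?_, ?_, ?_, ?_, ?_, ?_⟩
  · linear_combination (1 / 4) * v2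
  · linear_combination 2 * t2
  · linear_combination (1 / 12) * v2
  · linear_combination 2 * t2
  · linear_combination (1 / 12) * v2
  · linear_combination t2

theorem nonneg_aux (α : ℝ) (h₁ : (Real.sqrt 33 - 5) / 2 < α) (h₂ : α < Real.sqrt 2 - 1) :
    0 ≤ᵐ[volume.restrict (Icc α (α + 1))] invDens α := by
  obtain ⟨a1, a2, a3, a4⟩ := alpha_facts α h₁ h₂
  obtain ⟨p, hp⟩ : ∃ p, p = (1 - α) / (1 + α) := ⟨_, rfl⟩
  obtain ⟨q, hq⟩ : ∃ q, q = (3 * α - 1) / (1 - 2 * α) := ⟨_, rfl⟩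
  obtain ⟨r, hr⟩ : ∃ r, r = (6 * α - 2) / (1 - α) := ⟨_, rfl⟩
  obtain ⟨s, hs⟩ : ∃ s, s = (2 - 4 * α) / α := ⟨_, rfl⟩
  obtain ⟨-, ⟨o1, o2, o3⟩, ⟨o4, o5, o6⟩, -⟩ :=
    order_facts α p q r s _ a1 a2 a3 a4 hp hq hr hs rfl
  have v0 : 5.7 < Real.sqrt 33 := Real.lt_sqrt_of_sq_lt (by norm_num)
  have t0 : 1.4 < Real.sqrt 2 := Real.lt_sqrt_of_sq_lt (by norm_num)
  have v0' : Real.sqrt 33 < 6 := by rw [Real.sqrt_lt' (by norm_num)]; norm_num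
  have t0' : Real.sqrt 2 < 1.5 := by rw [Real.sqrt_lt' (by norm_num)]; norm_num
  rw [← Measure.restrict_congr_set (Ioo_ae_eq_Icc (μ := volume) (a := α) (b := α + 1))]
  refine (ae_restrict_iff' measurableSet_Ioo).2 ?_
  filter_upwards [bad_finite p q r s 0] with y hb hy
  have b1 := hb 1 (by simp)
  have b4 := hb 4 (by simp)
  simp only [mem_insert_iff, mem_singleton_iff, not_or] at b1 b4
  have np : y ≠ p := fun h => b1.1 (by rw [h])
  have nq : y ≠ q := fun h => b1.2.1 (by rw [h])
  have nr : y ≠ r := fun h => b4.2.2.2.2.1 (by rw [h])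
  have ns : y ≠ s := fun h => b4.2.2.2.2.2 (by rw [h])
  rw [dens_eq α p q r s y (by linarith) hp hq hr hs o2 o5 hy.1 hy.2 np nq nr ns]
  have y0 : 0 < y := by linarith [hy.1]
  exact mul_nonneg (one_div_pos.2 (Real.log_pos K_gt_one)).le
    (UL_nonneg _ _ _ _ p q r s y y0 (by linarith) (by linarith) (by linarith) (by linarith)
      (by linarith) (by linarith))

theorem point_aux (α p q r s w y : ℝ) (h₁ : (Real.sqrt 33 - 5) / 2 < α)
    (h₂ : α < Real.sqrt 2 - 1)
    (hp : p = (1 - α) / (1 + α)) (hq : q = (3 * α - 1) / (1 - 2 * α))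
    (hr : r = (6 * α - 2) / (1 - α)) (hs : s = (2 - 4 * α) / α)
    (hw : w = 2 * (1 - 2 * α) / (3 * α - 1))
    (y1 : α < y) (y2 : y < α + 1)
    (hb : ∀ d ∈ ({1, 2, 3, 4} : Set ℝ),
      d + y ∉ ({1 + p, 1 + q, w, w + 1, 4 + r, 4 + s} : Set ℝ)) :
    (Ico p (α + 1)).indicator
        (fun y => ENNReal.ofReal (2 / (1 + y) ^ 2 * invDens α (2 / (1 + y)))) y
    + (Ico α (α + 1)).indicator
        (fun y => ENNReal.ofReal (2 / (2 + y) ^ 2 * invDens α (2 / (2 + y)))) y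
    + (Ico α (α + 1)).indicator
        (fun y => ENNReal.ofReal (2 / (3 + y) ^ 2 * invDens α (2 / (3 + y)))) y
    + (Ico α s).indicator
        (fun y => ENNReal.ofReal (2 / (4 + y) ^ 2 * invDens α (2 / (4 + y)))) y
    = ENNReal.ofReal (invDens α y) := by
  obtain ⟨a1, a2, a3, a4⟩ := alpha_facts α h₁ h₂
  obtain ⟨⟨g1, g2, g3, g4⟩, ⟨o1, o2, o3⟩, ⟨o4, o5, o6⟩, ⟨w1, w2, w3, w4, w5⟩, l1, l2⟩ :=
    order_facts α p q r s w a1 a2 a3 a4 hp hq hr hs hw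
  have v2 : Real.sqrt 33 ^ 2 = 33 := Real.sq_sqrt (by norm_num)
  have t2 : Real.sqrt 2 ^ 2 = 2 := Real.sq_sqrt (by norm_num)
  have v0 : 5.7 < Real.sqrt 33 := Real.lt_sqrt_of_sq_lt (by norm_num)
  have t0 : 1.4 < Real.sqrt 2 := Real.lt_sqrt_of_sq_lt (by norm_num)
  obtain ⟨kA, kB, kC, kD, kE, kF⟩ := const_aux _ _ t2 v2
  have v0' : Real.sqrt 33 < 6 := by rw [Real.sqrt_lt' (by norm_num)]; norm_num
  have t0' : Real.sqrt 2 < 1.5 := by rw [Real.sqrt_lt' (by norm_num)]; norm_num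
  have hH : 0 < 1 / Real.log ((1 / 32) * (3 + 2 * Real.sqrt 2) * (7 + Real.sqrt 33) *
    (Real.sqrt 33 - 5) ^ 2) := one_div_pos.2 (Real.log_pos K_gt_one)
  have b1 := hb 1 (by simp)
  have b4 := hb 4 (by simp)
  simp only [mem_insert_iff, mem_singleton_iff, not_or] at b1 b4
  have np : y ≠ p := fun h => b1.1 (by rw [h])
  have nq : y ≠ q := fun h => b1.2.1 (by rw [h])
  have nr : y ≠ r := fun h => b4.2.2.2.2.1 (by rw [h])
  have ns : y ≠ s := fun h => b4.2.2.2.2.2 (by rw [h])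
  have hden := fun x x1 x2 np nq nr ns => dens_eq α p q r s x (by linarith) hp hq hr hs o2 o5
    x1 x2 np nq nr ns
  have hL2 := L2_aux α ((Real.sqrt 33 - 5) / 2) (Real.sqrt 2 - 1)
      ((Real.sqrt 33 - 3) / 6) (2 * Real.sqrt 2 - 2) p q r s w y g1 g2 g3 g4
      (by linarith) (by linarith) (by linarith) (by linarith) kA kB kC kD kE kF (by linarith) o1 o2 o3 o4 o5 o6
      w1 w2 w3 w4 w5 y1 y2 (by
        intro d hd h
        apply hb d hd
        exact subset_aux p q r s w h) np ns
  have hnn : ∀ x, 0 < x → 0 ≤ UL ((Real.sqrt 33 - 5) / 2) (Real.sqrt 2 - 1)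
      ((Real.sqrt 33 - 3) / 6) (2 * Real.sqrt 2 - 2) p q r s x := fun x hx =>
    UL_nonneg _ _ _ _ p q r s x hx (by linarith) (by linarith) (by linarith) (by linarith)
      (by linarith) (by linarith)
  generalize (1 / Real.log ((1 / 32) * (3 + 2 * Real.sqrt 2) * (7 + Real.sqrt 33) *
    (Real.sqrt 33 - 5) ^ 2)) = H at *
  generalize UL ((Real.sqrt 33 - 5) / 2) (Real.sqrt 2 - 1)
      ((Real.sqrt 33 - 3) / 6) (2 * Real.sqrt 2 - 2) p q r s = U at *
  have hu : ∀ d ∈ ({1, 2, 3, 4} : Set ℝ), 1 + p < d + y → d + y < 4 + s →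
      invDens α (2 / (d + y)) = H * U (2 / (d + y)) := by
    intro d hd hd1 hd2
    have hbd := hb d hd
    simp only [mem_insert_iff, mem_singleton_iff, not_or] at hbd
    have hu0 : 0 < d + y := by linarith
    have inj : ∀ v : ℝ, 0 < v → d + y ≠ v → 2 / (d + y) ≠ 2 / v := by
      intro v hv hne h
      rw [div_eq_div_iff hu0.ne' hv.ne'] at h
      exact hne (by linarith)
    apply hden
    · rw [l2]; exact (two_div_lt _ _ (by linarith) hu0).2 hd2
    · rw [l1]; exact (two_div_lt _ _ hu0 (by linarith)).2 hd1
    · rw [g1]; exact inj _ (by linarith) hbd.2.2.2.2.1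
    · rw [g2]; exact inj _ (by linarith) hbd.2.2.1
    · rw [g3]; exact inj _ (by linarith) hbd.2.2.2.1
    · rw [g4]; exact inj _ (by linarith) hbd.2.1
  have hy : y ∈ Ico α (α + 1) := ⟨y1.le, y2⟩
  have E1 : (Ico p (α + 1)).indicator
        (fun y => ENNReal.ofReal (2 / (1 + y) ^ 2 * invDens α (2 / (1 + y)))) y =
      ENNReal.ofReal (H * if p ≤ y then 2 / (1 + y) ^ 2 * U (2 / (1 + y)) else 0) := by
    by_cases h : p ≤ y
    · rw [indicator_of_mem (show y ∈ Ico p (α + 1) from ⟨h, y2⟩), if_pos h,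
        hu 1 (by simp) (by linarith [lt_of_le_of_ne h np.symm]) (by linarith)]
      congr 1; ring
    · rw [indicator_of_notMem (fun k => h k.1), if_neg h]; simp
  have E4 : (Ico α s).indicator
        (fun y => ENNReal.ofReal (2 / (4 + y) ^ 2 * invDens α (2 / (4 + y)))) y =
      ENNReal.ofReal (H * if y < s then 2 / (4 + y) ^ 2 * U (2 / (4 + y)) else 0) := by
    by_cases h : y < s
    · rw [indicator_of_mem (show y ∈ Ico α s from ⟨y1.le, h⟩), if_pos h,
        hu 4 (by simp) (by linarith) (by linarith)]
      congr 1; ring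
    · rw [indicator_of_notMem (fun k => h k.2), if_neg h]; simp
  have nn : ∀ d : ℝ, 0 < d → 0 ≤ 2 / (d + y) ^ 2 * U (2 / (d + y)) := fun d hd =>
    mul_nonneg (by positivity) (hnn _ (div_pos two_pos (by linarith)))
  have n1 := nn 1 (by norm_num)
  have n2 := nn 2 (by norm_num)
  have n3 := nn 3 (by norm_num)
  have n4 := nn 4 (by norm_num)
  have z1 : 0 ≤ H * if p ≤ y then 2 / (1 + y) ^ 2 * U (2 / (1 + y)) else 0 :=
    mul_nonneg hH.le (by split_ifs <;> [exact n1; exact le_rfl])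
  have z4 : 0 ≤ H * if y < s then 2 / (4 + y) ^ 2 * U (2 / (4 + y)) else 0 :=
    mul_nonneg hH.le (by split_ifs <;> [exact n4; exact le_rfl])
  have z2 := mul_nonneg hH.le n2
  have z3 := mul_nonneg hH.le n3
  rw [E1, E4, indicator_of_mem hy, indicator_of_mem hy,
    hu 2 (by simp) (by linarith) (by linarith), hu 3 (by simp) (by linarith) (by linarith),
    hden y y1 y2 np nq nr ns, ← hL2, mul_left_comm _ H, mul_left_comm _ H,
    ← ENNReal.ofReal_add z1 z2, ← ENNReal.ofReal_add (by linarith) z3,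
    ← ENNReal.ofReal_add (by linarith) z4]
  congr 1; ring

theorem inv_aux (α : ℝ) (h₁ : (Real.sqrt 33 - 5) / 2 < α) (h₂ : α < Real.sqrt 2 - 1)
    (S : Set ℝ) (hS : MeasurableSet S) :
    ∫⁻ x in Ioc α (α + 1), (Texp α ⁻¹' S).indicator (fun x => ENNReal.ofReal (invDens α x)) x =
    ∫⁻ y in Ico α (α + 1), S.indicator (fun x => ENNReal.ofReal (invDens α x)) y := by
  obtain ⟨a1, a2, a3, a4⟩ := alpha_facts α h₁ h₂
  obtain ⟨p, hp⟩ : ∃ p, p = (1 - α) / (1 + α) := ⟨_, rfl⟩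
  obtain ⟨q, hq⟩ : ∃ q, q = (3 * α - 1) / (1 - 2 * α) := ⟨_, rfl⟩
  obtain ⟨r, hr⟩ : ∃ r, r = (6 * α - 2) / (1 - α) := ⟨_, rfl⟩
  obtain ⟨s, hs⟩ : ∃ s, s = (2 - 4 * α) / α := ⟨_, rfl⟩
  obtain ⟨w, hw⟩ : ∃ w, w = 2 * (1 - 2 * α) / (3 * α - 1) := ⟨_, rfl⟩
  obtain ⟨-, ⟨o1, o2, o3⟩, ⟨o4, o5, o6⟩, -, l1, l2⟩ :=
    order_facts α p q r s w a1 a2 a3 a4 hp hq hr hs hw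
  have α0 : 0 < α := by linarith
  have P1 := piece_aux α p (α + 1) 1 S hS α0 o1.le (by linarith) le_rfl
  have P2 := piece_aux α α (α + 1) 2 S hS α0 le_rfl (by linarith) le_rfl
  have P3 := piece_aux α α (α + 1) 3 S hS α0 le_rfl (by linarith) le_rfl
  have P4 := piece_aux α α s 4 S hS α0 le_rfl (by linarith) o6.le
  simp only [Nat.cast_one, Nat.cast_ofNat] at P1 P2 P3 P4
  rw [← l1, show (1 : ℝ) + (α + 1) = 2 + α by ring] at P1
  rw [show (2 : ℝ) + (α + 1) = 3 + α by ring] at P2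
  rw [show (3 : ℝ) + (α + 1) = 4 + α by ring] at P3
  rw [← l2] at P4
  have c1 : 2 / (2 + α) ≤ α + 1 := by
    rw [l1]; exact div_le_div_of_nonneg_left (by norm_num) (by linarith) (by linarith)
  have c2 : 2 / (3 + α) ≤ 2 / (2 + α) :=
    div_le_div_of_nonneg_left (by norm_num) (by linarith) (by linarith)
  have c3 : 2 / (4 + α) ≤ 2 / (3 + α) :=
    div_le_div_of_nonneg_left (by norm_num) (by linarith) (by linarith)
  have c4 : α ≤ 2 / (4 + α) := by
    conv_lhs => rw [l2]
    exact div_le_div_of_nonneg_left (by norm_num) (by linarith) (by linarith)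
  have hm : ∀ d a b : ℝ, Measurable (S.indicator (fun y => (Ico a b).indicator (fun y =>
      ENNReal.ofReal (2 / (d + y) ^ 2 * invDens α (2 / (d + y)))) y)) := by
    intro d a b
    refine Measurable.indicator (Measurable.indicator ?_ measurableSet_Ico) hS
    have := invDens_meas α
    fun_prop
  rw [split_aux _ α (2 / (2 + α)) (α + 1) (by linarith) c1,
    split_aux _ α (2 / (3 + α)) (2 / (2 + α)) (by linarith) c2,
    split_aux _ α (2 / (4 + α)) (2 / (3 + α)) (by linarith) c3, P1, P2, P3, P4,
    ← lintegral_add_right _ (hm _ _ _), ← lintegral_add_right _ (hm _ _ _),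
    ← lintegral_add_right _ (hm _ _ _)]
  rw [← Measure.restrict_congr_set (Ioo_ae_eq_Ico (μ := volume) (a := α) (b := α + 1))]
  apply setLIntegral_congr_fun_ae measurableSet_Ioo
  filter_upwards [bad_finite p q r s w] with y hb hy
  have := point_aux α p q r s w y h₁ h₂ hp hq hr hs hw hy.1 hy.2 hb
  by_cases k : y ∈ S
  · simp only [indicator_of_mem k]
    rw [← this]; ring
  · simp only [indicator_of_notMem k]; simp

theorem stmt_7 (α : ℝ) (h₁ : (Real.sqrt 33 - 5) / 2 < α) (h₂ : α < Real.sqrt 2 - 1) :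
    MeasurePreserving (Texp α)
      ((volume.restrict (Icc α (α + 1))).withDensity fun x => ENNReal.ofReal (invDens α x))
      ((volume.restrict (Icc α (α + 1))).withDensity fun x => ENNReal.ofReal (invDens α x)) ∧
    IsProbabilityMeasure
      ((volume.restrict (Icc α (α + 1))).withDensity fun x => ENNReal.ofReal (invDens α x)) := by
  refine ⟨⟨Texp_meas α, ?_⟩, ⟨?_⟩⟩
  · ext S hS
    have hT := Texp_meas α hS
    rw [Measure.map_apply (Texp_meas α) hS, withDensity_apply _ hT, withDensity_apply _ hS,
      ← lintegral_indicator hT, ← lintegral_indicator hS, 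
      ← Measure.restrict_congr_set (Ioc_ae_eq_Icc (μ := volume) (a := α) (b := α + 1)),
      inv_aux α h₁ h₂ S hS, 
      Measure.restrict_congr_set (Ico_ae_eq_Ioc (μ := volume) (a := α) (b := α + 1))]
  · obtain ⟨hi, h1⟩ := prob_aux α h₁ h₂
    obtain ⟨a1, a2, a3, a4⟩ := alpha_facts α h₁ h₂
    rw [withDensity_apply _ MeasurableSet.univ, Measure.restrict_univ,
      ← ofReal_integral_eq_lintegral_ofReal hi (nonneg_aux α h₁ h₂), h1,
      ENNReal.ofReal_one]
end

section
/- Let α ∈ ((√33 − 5)/2, √2 − 1) and set A = (√33 − 5)/2, B = √2 − 1, C = (√33 − 3)/6, D = 2√2 − 2, E = (√33 − 3)/2, F = √2. Then ∫_α^{α+1} ( D/(2 + Dx)·1_{(α, (1−α)/(1+α))}(x) + E/(2 + Ex)·1_{((1−α)/(1+α), (3α−1)/(1−2α))}(x) + F/(2 + Fx)·1_{((3α−1)/(1−2α), α+1)}(x) − A/(2 + Ax)·1_{(α, (6α−2)/(1−α))}(x) − B/(2 + Bx)·1_{((6α−2)/(1−α), (2−4α)/α)}(x) − C/(2 + Cx)·1_{((2−4α)/α,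 α+1)}(x) ) dx = log((1/32)(3 + 2√2)(7 + √33)(√33 − 5)²); in particular this integral does not depend on α. -/
open MeasureTheory Set

/-- The unnormalized invariant density, with
`A = (√33-5)/2`, `B = √2-1`, `C = (√33-3)/6`, `D = 2√2-2`, `E = (√33-3)/2`, `F = √2`. -/
noncomputable def g (α x : ℝ) : ℝ :=
    indicator (Ioo α ((1 - α) / (1 + α)))
      (fun t => (2 * Real.sqrt 2 - 2) / (2 + (2 * Real.sqrt 2 - 2) * t)) x
  + indicator (Ioo ((1 - α) / (1 + α)) ((3 * α - 1) / (1 - 2 * α)))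
      (fun t => ((Real.sqrt 33 - 3) / 2) / (2 + ((Real.sqrt 33 - 3) / 2) * t)) x
  + indicator (Ioo ((3 * α - 1) / (1 - 2 * α)) (α + 1))
      (fun t => Real.sqrt 2 / (2 + Real.sqrt 2 * t)) x
  - indicator (Ioo α ((6 * α - 2) / (1 - α)))
      (fun t => ((Real.sqrt 33 - 5) / 2) / (2 + ((Real.sqrt 33 - 5) / 2) * t)) x
  - indicator (Ioo ((6 * α - 2) / (1 - α)) ((2 - 4 * α) / α))
      (fun t => (Real.sqrt 2 - 1) / (2 + (Real.sqrt 2 - 1) * t)) x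
  - indicator (Ioo ((2 - 4 * α) / α) (α + 1))
      (fun t => ((Real.sqrt 33 - 3) / 6) / (2 + ((Real.sqrt 33 - 3) / 6) * t)) x

lemma aux_ind (c a b p q : ℝ) (hc : 0 < c) (ha : 0 < a) (hap : a ≤ p) (hpq : p ≤ q) (hqb : q ≤ b) :
    IntervalIntegrable (indicator (Ioo p q) (fun t => c / (2 + c * t))) volume a b ∧
    ∫ x in a..b, indicator (Ioo p q) (fun t => c / (2 + c * t)) x
      = Real.log (2 + c * q) - Real.log (2 + c * p) := by
  have hab : a ≤ b := hap.trans (hpq.trans hqb)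
  have hpos : ∀ t, a ≤ t → 0 < 2 + c * t := fun t ht => by
    have : 0 < c * t := mul_pos hc (ha.trans_le ht)
    linarith
  have hcont : ∀ x y, a ≤ x → x ≤ y → ContinuousOn (fun t => c / (2 + c * t)) (Icc x y) := by
    intro x y hx _
    apply ContinuousOn.div (by fun_prop) (by fun_prop)
    intro t ht
    exact (hpos t (hx.trans ht.1)).ne'
  have hsub : Ioo p q ⊆ Ioc a b := fun t ht => ⟨hap.trans_lt ht.1, ht.2.le.trans hqb⟩
  constructor
  · rw [intervalIntegrable_iff_integrableOn_Ioc_of_le hab]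
    have h := (hcont a b le_rfl hab).integrableOn_Icc (μ := volume)
    exact (h.mono_set Ioc_subset_Icc_self).indicator measurableSet_Ioo
  · rw [intervalIntegral.integral_of_le hab, setIntegral_indicator measurableSet_Ioo,
      inter_eq_right.mpr hsub, ← integral_Ioc_eq_integral_Ioo,
      ← intervalIntegral.integral_of_le hpq]
    apply intervalIntegral.integral_eq_sub_of_hasDerivAt
      (f := fun t => Real.log (2 + c * t))
    · intro t ht
      rw [uIcc_of_le hpq] at ht
      have h0 := (hpos t (hap.trans ht.1)).ne'
      have h1 : HasDerivAt (fun t => 2 + c * t) c t := by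
        simpa using ((hasDerivAt_id t).const_mul c).const_add 2
      exact h1.log h0
    · apply ContinuousOn.intervalIntegrable
      rw [uIcc_of_le hpq]
      exact hcont p q hap hpq

lemma aux_log (x k u d : ℝ) (hk : 0 < k) (hu : 0 < u) (hd : 0 < d) (h : x * d = k * u) :
    Real.log x = Real.log k + Real.log u - Real.log d := by
  have : x = k * u / d := by field_simp; linarith
  rw [this, Real.log_div (by positivity) hd.ne', Real.log_mul hk.ne' hu.ne']

set_option maxHeartbeats 4000000 in
theorem stmt_8 (α : ℝ) (h₁ : (Real.sqrt 33 - 5) / 2 < α) (h₂ : α < Real.sqrt 2 - 1) :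
    ∫ x in α..(α + 1), g α x =
      Real.log ((1 / 32) * (3 + 2 * Real.sqrt 2) * (7 + Real.sqrt 33) * (Real.sqrt 33 - 5) ^ 2) := by
  have hs : Real.sqrt 2 ^ 2 = 2 := Real.sq_sqrt (by norm_num)
  have ht : Real.sqrt 33 ^ 2 = 33 := Real.sq_sqrt (by norm_num)
  have hs0 : 1.4142 < Real.sqrt 2 := by
    rw [Real.lt_sqrt (by norm_num)]; norm_num
  have hs1 : Real.sqrt 2 < 1.4143 := by
    rw [Real.sqrt_lt' (by norm_num)]; norm_num
  have ht0 : 5.7445 < Real.sqrt 33 := by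
    rw [Real.lt_sqrt (by norm_num)]; norm_num
  have ht1 : Real.sqrt 33 < 5.7446 := by
    rw [Real.sqrt_lt' (by norm_num)]; norm_num
  unfold g
  generalize Real.sqrt 2 = s at *
  generalize Real.sqrt 33 = t at *
  have ha0 : 0.372 < α := by linarith
  have ha1 : α < 0.4143 := by linarith
  have hq1 : 0 < α ^ 2 + 5 * α - 2 := by nlinarith
  have hq2 : α ^ 2 + 2 * α - 1 < 0 := by nlinarith
  have d1 : 0 < 1 + α := by linarith
  have d2 : 0 < 1 - 2 * α := by linarith
  have d3 : 0 < 1 - α := by linarith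
  have d4 : 0 < α := by linarith
  have o1 : α ≤ (1 - α) / (1 + α) := by rw [le_div_iff₀ d1]; nlinarith
  have o2 : (1 - α) / (1 + α) ≤ (3 * α - 1) / (1 - 2 * α) := by
    rw [div_le_div_iff₀ d1 d2]; nlinarith
  have o3 : (3 * α - 1) / (1 - 2 * α) ≤ α + 1 := by rw [div_le_iff₀ d2]; nlinarith
  have o4 : α ≤ (6 * α - 2) / (1 - α) := by rw [le_div_iff₀ d3]; nlinarith
  have o5 : (6 * α - 2) / (1 - α) ≤ (2 - 4 * α) / α := by
    rw [div_le_div_iff₀ d3 d4]; nlinarith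
  have o6 : (2 - 4 * α) / α ≤ α + 1 := by rw [div_le_iff₀ d4]; nlinarith
  obtain ⟨i1, e1⟩ := aux_ind (2 * s - 2) α (α + 1) _ _ (by linarith) d4 le_rfl o1 (o2.trans o3)
  obtain ⟨i2, e2⟩ := aux_ind ((t - 3) / 2) α (α + 1) _ _ (by linarith) d4 o1 o2 o3
  obtain ⟨i3, e3⟩ := aux_ind s α (α + 1) _ _ (by linarith) d4 (o1.trans o2) o3 le_rfl
  obtain ⟨i4, e4⟩ := aux_ind ((t - 5) / 2) α (α + 1) _ _ (by linarith) d4 le_rfl o4 (o5.trans o6)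
  obtain ⟨i5, e5⟩ := aux_ind (s - 1) α (α + 1) _ _ (by linarith) d4 o4 o5 o6
  obtain ⟨i6, e6⟩ := aux_ind ((t - 3) / 6) α (α + 1) _ _ (by linarith) d4 (o4.trans o5) o6 le_rfl
  rw [intervalIntegral.integral_sub ((((i1.add i2).add i3).sub i4).sub i5) i6,
    intervalIntegral.integral_sub (((i1.add i2).add i3).sub i4) i5,
    intervalIntegral.integral_sub ((i1.add i2).add i3) i4,
    intervalIntegral.integral_add (i1.add i2) i3,
    intervalIntegral.integral_add i1 i2, e1, e2, e3, e4, e5, e6]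
  have hu : 0 < α + s + 1 := by linarith
  have hv : 0 < α + (t + 5) / 2 := by linarith
  have k1 : 0 < 4 - 2 * s := by linarith
  have k2 : 0 < (3 * t - 17) / 2 := by linarith
  have k3 : 0 < s := by linarith
  have k4 : 0 < (t - 5) / 2 := by linarith
  have k5 : 0 < 6 * s - 8 := by linarith
  have k6 : 0 < (12 - 2 * t) / 3 := by linarith
  have m1 : 0 < 2 * s - 2 := by linarith
  have m2 : 0 < (7 - t) / 2 := by linarith
  have m3 : 0 < 3 * s - 4 := by linarith
  have m4 : 0 < 3 * t - 17 := by linarith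
  have m5 : 0 < 6 - 4 * s := by linarith
  have m6 : 0 < (t - 3) / 6 := by linarith
  have a1 := aux_log (2 + (2 * s - 2) * ((1 - α) / (1 + α))) _ _ _ k1 hu d1
    (by field_simp; linarith)
  have a2 := aux_log (2 + (t - 3) / 2 * ((3 * α - 1) / (1 - 2 * α))) _ _ _ k2 hv d2
    (by field_simp; linarith)
  have a3 := aux_log (2 + s * (α + 1)) _ _ _ k3 hu one_pos (by linarith)
  have a4 := aux_log (2 + (t - 5) / 2 * α) _ _ _ k4 hv one_pos (by linarith)
  have a5 := aux_log (2 + (s - 1) * ((6 * α - 2) / (1 - α))) _ _ _ k5 hu d3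
    (by field_simp; linarith)
  have a6 := aux_log (2 + (t - 3) / 6 * ((2 - 4 * α) / α)) _ _ _ k6 hv d4
    (by field_simp; linarith)
  have b1 := aux_log (2 + (2 * s - 2) * α) _ _ _ m1 hu one_pos (by linarith)
  have b2 := aux_log (2 + (t - 3) / 2 * ((1 - α) / (1 + α))) _ _ _ m2 hv d1
    (by field_simp; linarith)
  have b3 := aux_log (2 + s * ((3 * α - 1) / (1 - 2 * α))) _ _ _ m3 hu d2
    (by field_simp; linarith)
  have b4 := aux_log (2 + (t - 5) / 2 * ((6 * α - 2) / (1 - α))) _ _ _ m4 hv d3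
    (by field_simp; linarith)
  have b5 := aux_log (2 + (s - 1) * ((2 - 4 * α) / α)) _ _ _ m5 hu d4
    (by field_simp; linarith)
  have b6 := aux_log (2 + (t - 3) / 6 * (α + 1)) _ _ _ m6 hv one_pos (by linarith)
  rw [a1, a2, a3, a4, a5, a6, b1, b2, b3, b4, b5, b6]
  have hR : 0 < (1 / 32) * (3 + 2 * s) * (7 + t) * (t - 5) ^ 2 := by
    have : 0 < t - 5 := by linarith
    positivity
  have hS : (4 - 2 * s) * s * (6 * s - 8) = 2 * ((3 + 2 * s) * ((2 * s - 2) * (3 * s - 4) * (6 - 4 * s))) := by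
    have h3 : s ^ 3 = 2 * s := by rw [pow_succ, hs]
    have h4 : s ^ 4 = 4 := by rw [show s ^ 4 = (s ^ 2) ^ 2 by ring, hs]; norm_num
    ring_nf
    rw [hs, h3, h4]; ring
  have hT : (t - 5) / 2 * ((12 - 2 * t) / 3) = 1 / 32 * ((7 + t) * (t - 5) ^ 2 * ((7 - t) / 2 * ((t - 3) / 6))) := by
    have h3 : t ^ 3 = 33 * t := by rw [pow_succ, ht]
    have h4 : t ^ 4 = 33 ^ 2 := by rw [show t ^ 4 = (t ^ 2) ^ 2 by ring, ht]
    have h5 : t ^ 5 = 33 ^ 2 * t := by rw [pow_succ, h4]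
    ring_nf
    rw [ht, h3, h4, h5]; ring
  have key : (4 - 2 * s) * ((3 * t - 17) / 2) * s * ((t - 5) / 2) * (6 * s - 8) * ((12 - 2 * t) / 3)
      = ((1 / 32) * (3 + 2 * s) * (7 + t) * (t - 5) ^ 2) *
        ((2 * s - 2) * ((7 - t) / 2) * (3 * s - 4) * (3 * t - 17) * (6 - 4 * s) * ((t - 3) / 6)) := by
    linear_combination ((3 * t - 17) / 2 * ((t - 5) / 2 * ((12 - 2 * t) / 3))) * hS
      + ((3 * t - 17) / 2 * (2 * ((3 + 2 * s) * ((2 * s - 2) * (3 * s - 4) * (6 - 4 * s))))) * hT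
  have kl := congrArg Real.log key
  rw [Real.log_mul (by positivity) (by positivity), Real.log_mul (by positivity) (by positivity),
    Real.log_mul (by positivity) (by positivity), Real.log_mul (by positivity) (by positivity),
    Real.log_mul (by positivity) (by positivity),
    Real.log_mul hR.ne' (by positivity),
    Real.log_mul (x := _ * _ * _ * _ * _) (by positivity) (by positivity),
    Real.log_mul (x := (2 * s - 2) * ((7 - t) / 2) * (3 * s - 4) * (3 * t - 17)) (by positivity) (by positivity),
    Real.log_mul (x := (2 * s - 2) * ((7 - t) / 2) * (3 * s - 4)) (by positivity) (by positivity),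
    Real.log_mul (x := (2 * s - 2) * ((7 - t) / 2)) (by positivity) (by positivity),
    Real.log_mul (x := (2 * s - 2)) (by positivity) (by positivity)] at kl
  linarith
end

section
/- Let T : [√2 − 1, √2] → [√2 − 1, √2] be defined by T(x) = 2/x − 1 for 2(√2−1) < x ≤ √2, T(x) = 2/x − 2 for 2 − √2 < x ≤ 2(√2−1), T(x) = 2/x − 3 for (6 − 2√2)/7 < x ≤ 2 − √2, and T(x) = 2/x − 4 for √2 − 1 ≤ x ≤ (6 − 2√2)/7. Define f on [√2 − 1, √2] by f(x) = (√33−3)/(4 + (√33−3)x) − (√33−5)/(4 + (√33−5)x) for √2 − 1 ≤ x ≤ 2(√2−1) and f(x) = (√33−3)/(4 + (√33−3)x) − (√33−3)/(12 + (√33−3)x) for 2(√2−1) < x ≤ √2. Then the measure μ with density f with respect to Lebesgue measure on [√2 − 1, √2] satisfies μ(T⁻¹(A)) = μ(A) for every Borel set A ⊆ [√2 − 1, √2], i.e. f is (up to a normalizing constant) the density of a T-invariant measure. -/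
open MeasureTheory Set

/-- The 2-expansion map on `[√2 - 1, √2]` with four branches. -/
noncomputable def Tbar (x : ℝ) : ℝ :=
  if 2 * (Real.sqrt 2 - 1) < x then 2 / x - 1
  else if 2 - Real.sqrt 2 < x then 2 / x - 2
  else if (6 - 2 * Real.sqrt 2) / 7 < x then 2 / x - 3
  else 2 / x - 4

/-- The (unnormalized) invariant density on `[√2 - 1, √2]`. -/
noncomputable def fbar (x : ℝ) : ℝ :=
  if x ≤ 2 * (Real.sqrt 2 - 1) then
    (Real.sqrt 33 - 3) / (4 + (Real.sqrt 33 - 3) * x)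
      - (Real.sqrt 33 - 5) / (4 + (Real.sqrt 33 - 5) * x)
  else
    (Real.sqrt 33 - 3) / (4 + (Real.sqrt 33 - 3) * x)
      - (Real.sqrt 33 - 3) / (12 + (Real.sqrt 33 - 3) * x)

lemma key_aux (t e c : ℝ) (ht : 0 < t) (he : 0 < e) (hc : 0 < c) (h : e * c = 2) :
    2 / t ^ 2 * (1 / (2 / t + e)) = 1 / t - 1 / (t + c) := by
  have h1 : 0 < 2 + e * t := by positivity
  have h2 : 2 / t + e = (2 + e * t) / t := by field_simp
  have h3 : 0 < t + c := by positivity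
  rw [h2]
  have h4 : e * (t + c) = 2 + e * t := by linear_combination h
  rw [← h4]
  field_simp
  linear_combination -h

lemma frac_aux_s9 (k a y e : ℝ) (ha : 0 < a) (hy : 0 < y) (he : 0 < e) (h : k = a * e) :
    a / (k + a * y) = 1 / (y + e) := by
  subst h
  have : 0 < a * e + a * y := by positivity
  have : 0 < y + e := by positivity
  field_simp
  ring

lemma s_lo : (1.414 : ℝ) < Real.sqrt 2 := Real.lt_sqrt_of_sq_lt (by norm_num)
lemma s_hi : Real.sqrt 2 < (1.415 : ℝ) := (Real.sqrt_lt' (by norm_num)).2 (by norm_num)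
lemma s_sq : Real.sqrt 2 * Real.sqrt 2 = 2 := Real.mul_self_sqrt (by norm_num)
lemma w_lo : (5.7 : ℝ) < Real.sqrt 33 := Real.lt_sqrt_of_sq_lt (by norm_num)
lemma w_hi : Real.sqrt 33 < (5.8 : ℝ) := (Real.sqrt_lt' (by norm_num)).2 (by norm_num)
lemma w_sq : Real.sqrt 33 * Real.sqrt 33 = 33 := Real.mul_self_sqrt (by norm_num)

lemma fbar_lo (y : ℝ) (hy : 0 < y) (h : y ≤ 2 * (Real.sqrt 2 - 1)) :
    fbar y = 1 / (y + (Real.sqrt 33 + 3) / 6) - 1 / (y + (Real.sqrt 33 + 5) / 2) := by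
  have := w_lo
  have := w_sq
  rw [fbar, if_pos h, frac_aux_s9 4 _ y ((Real.sqrt 33 + 3) / 6), frac_aux_s9 4 _ y ((Real.sqrt 33 + 5) / 2)]
  all_goals linarith

lemma fbar_hi (y : ℝ) (hy : 0 < y) (h : 2 * (Real.sqrt 2 - 1) < y) :
    fbar y = 1 / (y + (Real.sqrt 33 + 3) / 6) - 1 / (y + (Real.sqrt 33 + 3) / 2) := by
  have := w_lo
  have := w_sq
  rw [fbar, if_neg (not_le.2 h), frac_aux_s9 4 _ y ((Real.sqrt 33 + 3) / 6),
    frac_aux_s9 12 _ y ((Real.sqrt 33 + 3) / 2)]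
  all_goals linarith

lemma p1 (y : ℝ) (hy : 0 < y) (h : 2 * (Real.sqrt 2 - 1) < 2 / (y + 1)) :
    2 / (y + 1) ^ 2 * fbar (2 / (y + 1)) =
      1 / (y + (Real.sqrt 33 + 3) / 6) - 1 / (y + (Real.sqrt 33 - 1) / 2) := by
  have := w_lo
  have := w_sq
  rw [fbar_hi _ (by positivity) h, mul_sub,
    key_aux (y + 1) ((Real.sqrt 33 + 3) / 6) ((Real.sqrt 33 - 3) / 2),
    key_aux (y + 1) ((Real.sqrt 33 + 3) / 2) ((Real.sqrt 33 - 3) / 6)]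
  · rw [show y + 1 + (Real.sqrt 33 - 3) / 2 = y + (Real.sqrt 33 - 1) / 2 by ring,
      show y + 1 + (Real.sqrt 33 - 3) / 6 = y + (Real.sqrt 33 + 3) / 6 by ring]
    ring
  all_goals linarith

lemma pd (y d : ℝ) (hy : 0 < y) (hd : 0 < d) (h : 2 / (y + d) ≤ 2 * (Real.sqrt 2 - 1)) :
    2 / (y + d) ^ 2 * fbar (2 / (y + d)) =
      1 / (y + d + (Real.sqrt 33 - 5) / 2) - 1 / (y + d + (Real.sqrt 33 - 3) / 2) := by
  have := w_lo
  have := w_sq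
  rw [fbar_lo _ (by positivity) h, mul_sub,
    key_aux (y + d) ((Real.sqrt 33 + 3) / 6) ((Real.sqrt 33 - 3) / 2),
    key_aux (y + d) ((Real.sqrt 33 + 5) / 2) ((Real.sqrt 33 - 5) / 2)]
  · ring
  all_goals linarith

lemma cov (d : ℝ) (hd : 0 < d) (S : Set ℝ) (hS : MeasurableSet S) (hpos : ∀ y ∈ S, 0 < y)
    (p : ℝ → ℝ) (hp : ∀ y ∈ S, 2 / (y + d) ^ 2 * fbar (2 / (y + d)) = p y) :
    ∫⁻ x in (fun y => 2 / (y + d)) '' S, ENNReal.ofReal (fbar x)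
      = ∫⁻ y in S, ENNReal.ofReal (p y) := by
  rw [lintegral_image_eq_lintegral_abs_deriv_mul (f' := fun y => -2 / (y + d) ^ 2) hS]
  · apply setLIntegral_congr_fun hS
    intro y hy
    have := hpos y hy
    simp only
    rw [← ENNReal.ofReal_mul (abs_nonneg _), ← hp y hy, neg_div, abs_neg, abs_of_pos (by positivity)]
  · intro y hy
    have := hpos y hy
    have h1 : HasDerivAt (fun y : ℝ => y + d) 1 y := (hasDerivAt_id y).add_const d
    have h2 := (hasDerivAt_const y (2 : ℝ)).div h1 (by positivity)
    have h3 := h2.hasDerivWithinAt (s := S)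
    refine h3.congr_deriv ?_
    congr 1
    ring
  · intro a ha b hb hab
    have := hpos a ha
    have := hpos b hb
    simp only at hab
    rw [div_eq_div_iff (by positivity) (by positivity)] at hab
    linarith

lemma meas_img (d : ℝ) (hd : 0 < d) (S : Set ℝ) (hS : MeasurableSet S) (hpos : ∀ y ∈ S, 0 < y) :
    MeasurableSet ((fun y : ℝ => 2 / (y + d)) '' S) := by
  apply hS.image_of_continuousOn_injOn
  · intro y hy
    have := hpos y hy
    apply ContinuousAt.continuousWithinAt
    have : y + d ≠ 0 := by positivity
    fun_prop (disch := assumption)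
  · intro a ha b hb hab
    have := hpos a ha
    have := hpos b hb
    simp only at hab
    rw [div_eq_div_iff (by positivity) (by positivity)] at hab
    linarith

/-- bounds of `2/(y+d)` from bounds on `y` -/
lemma g_lt (y d u v : ℝ) (hy : 0 < y + d) (hu : 0 < u) (huv : u * (v + d) = 2) :
    (u < 2 / (y + d) ↔ y < v) := by
  rw [lt_div_iff₀ hy, ← huv, mul_lt_mul_iff_right₀ hu]
  constructor <;> intro h <;> linarith

lemma g_inv (x y d : ℝ) (hx : 0 < x) (hy : 0 < y + d) : 2 / x - d = y ↔ x = 2 / (y + d) := by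
  rw [eq_div_iff hy.ne', sub_eq_iff_eq_add, div_eq_iff hx.ne']
  constructor <;> intro h <;> linarith

lemma preim (A : Set ℝ) (hA : A ⊆ Icc (Real.sqrt 2 - 1) (Real.sqrt 2)) :
    Tbar ⁻¹' A ∩ Icc (Real.sqrt 2 - 1) (Real.sqrt 2) =
      (((fun y => 2 / (y + 1)) '' (A ∩ Iio (Real.sqrt 2)) ∪
      (fun y => 2 / (y + 2)) '' (A ∩ Iio (Real.sqrt 2))) ∪
      (fun y => 2 / (y + 3)) '' (A ∩ Iio (Real.sqrt 2))) ∪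
      (fun y => 2 / (y + 4)) '' (A ∩ Iic (2 * (Real.sqrt 2 - 1))) := by
  have hl := s_lo
  have hh := s_hi
  have hs := s_sq
  ext x
  constructor
  · rintro ⟨hx, hx1, hx2⟩
    have hx0 : 0 < x := by linarith
    rw [mem_preimage] at hx
    have hT := hA hx
    obtain ⟨y, hy⟩ : ∃ y, y = Tbar x := ⟨_, rfl⟩
    rw [← hy] at hx hT
    obtain ⟨hT1, hT2⟩ := hT
    unfold Tbar at hy
    split_ifs at hy with c1 c2 c3
    · left; left; left
      have e := (g_inv x y 1 hx0 (by linarith)).1 hy.symm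
      refine ⟨y, ⟨hx, ?_⟩, e.symm⟩
      rw [e] at c1
      exact (g_lt y 1 _ _ (by linarith) (by linarith) (by linarith)).1 c1
    · left; left; right
      have e := (g_inv x y 2 hx0 (by linarith)).1 hy.symm
      refine ⟨y, ⟨hx, ?_⟩, e.symm⟩
      rw [e] at c2
      exact (g_lt y 2 _ _ (by linarith) (by linarith) (by linarith)).1 c2
    · left; right
      have e := (g_inv x y 3 hx0 (by linarith)).1 hy.symm
      refine ⟨y, ⟨hx, ?_⟩, e.symm⟩
      rw [e] at c3
      exact (g_lt y 3 _ _ (by linarith) (by linarith) (by linarith)).1 c3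
    · right
      have e := (g_inv x y 4 hx0 (by linarith)).1 hy.symm
      refine ⟨y, ⟨hx, ?_⟩, e.symm⟩
      by_contra hc
      have hc : 2 * (Real.sqrt 2 - 1) < y := not_le.1 hc
      rw [e, le_div_iff₀ (by linarith)] at hx1
      nlinarith
  · rintro (((⟨y, ⟨hyA, hy⟩, rfl⟩ | ⟨y, ⟨hyA, hy⟩, rfl⟩) | ⟨y, ⟨hyA, hy⟩, rfl⟩) | ⟨y, ⟨hyA, hy⟩, rfl⟩)
    all_goals
      obtain ⟨hT1, hT2⟩ := hA hyA
      simp only [mem_Iio, mem_Iic] at hy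
      simp only [mem_inter_iff, mem_preimage, mem_Icc]
    · have c1 : 2 * (Real.sqrt 2 - 1) < 2 / (y + 1) :=
        (g_lt y 1 _ (Real.sqrt 2) (by linarith) (by linarith) (by linarith)).2 hy
      have c0 : 2 / (y + 1) ≤ Real.sqrt 2 :=
        not_lt.1 (mt (g_lt y 1 _ (Real.sqrt 2 - 1) (by linarith) (by linarith) (by linarith)).1 (by linarith))
      refine ⟨?_, by linarith, by linarith⟩
      rw [Tbar, if_pos c1, (g_inv _ y 1 (by linarith) (by linarith)).2 rfl]
      exact hyA
    · have c1 : 2 - Real.sqrt 2 < 2 / (y + 2) :=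
        (g_lt y 2 _ (Real.sqrt 2) (by linarith) (by linarith) (by linarith)).2 hy
      have c0 : 2 / (y + 2) ≤ 2 * (Real.sqrt 2 - 1) :=
        not_lt.1 (mt (g_lt y 2 _ (Real.sqrt 2 - 1) (by linarith) (by linarith) (by linarith)).1 (by linarith))
      refine ⟨?_, by linarith, by linarith⟩
      rw [Tbar, if_neg (not_lt.2 c0), if_pos c1, (g_inv _ y 2 (by linarith) (by linarith)).2 rfl]
      exact hyA
    · have c1 : (6 - 2 * Real.sqrt 2) / 7 < 2 / (y + 3) :=
        (g_lt y 3 _ (Real.sqrt 2) (by linarith) (by linarith) (by linarith)).2 hy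
      have c0 : 2 / (y + 3) ≤ 2 - Real.sqrt 2 :=
        not_lt.1 (mt (g_lt y 3 _ (Real.sqrt 2 - 1) (by linarith) (by linarith) (by linarith)).1 (by linarith))
      refine ⟨?_, by linarith, by linarith⟩
      rw [Tbar, if_neg (by linarith), if_neg (not_lt.2 c0), if_pos c1,
        (g_inv _ y 3 (by linarith) (by linarith)).2 rfl]
      exact hyA
    · have c1 : Real.sqrt 2 - 1 ≤ 2 / (y + 4) := by
        rw [le_div_iff₀ (by linarith)]
        nlinarith
      have c0 : 2 / (y + 4) ≤ (6 - 2 * Real.sqrt 2) / 7 :=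
        not_lt.1 (mt (g_lt y 4 _ (Real.sqrt 2 - 1) (by linarith) (by linarith) (by linarith)).1 (by linarith))
      refine ⟨?_, by linarith, by linarith⟩
      rw [Tbar, if_neg (by linarith), if_neg (by linarith), if_neg (not_lt.2 c0),
        (g_inv _ y 4 (by linarith) (by linarith)).2 rfl]
      exact hyA

lemma g_le (y d u v : ℝ) (hy : 0 < y + d) (hu : 0 < u) (huv : u * (v + d) = 2) (h : v ≤ y) :
    2 / (y + d) ≤ u :=
  not_lt.1 (mt (g_lt y d u v hy hu huv).1 (not_lt.2 h))

lemma sub_nn (a b : ℝ) (ha : 0 < a) (h : a ≤ b) : 0 ≤ 1 / a - 1 / b :=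
  sub_nonneg.2 (one_div_le_one_div_of_le ha h)

lemma add_lint (S : Set ℝ) (hS : MeasurableSet S) (hpos : ∀ y ∈ S, 0 < y) (a b c : ℝ)
    (ha : 0 < a) (hab : a ≤ b) (hbc : b ≤ c) :
    (∫⁻ y in S, ENNReal.ofReal (1 / (y + a) - 1 / (y + b))) +
      (∫⁻ y in S, ENNReal.ofReal (1 / (y + b) - 1 / (y + c))) =
      ∫⁻ y in S, ENNReal.ofReal (1 / (y + a) - 1 / (y + c)) := by
  rw [← lintegral_add_left (by fun_prop)]
  apply setLIntegral_congr_fun hS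
  intro y hy
  have := hpos y hy
  simp only
  rw [← ENNReal.ofReal_add (sub_nn _ _ (by linarith) (by linarith))
    (sub_nn _ _ (by linarith) (by linarith))]
  congr 1
  ring

theorem stmt_9 :
    ∀ A : Set ℝ, MeasurableSet A → A ⊆ Icc (Real.sqrt 2 - 1) (Real.sqrt 2) →
      ((volume.restrict (Icc (Real.sqrt 2 - 1) (Real.sqrt 2))).withDensity
          (fun x => ENNReal.ofReal (fbar x))) (Tbar ⁻¹' A) =
      ((volume.restrict (Icc (Real.sqrt 2 - 1) (Real.sqrt 2))).withDensity
          (fun x => ENNReal.ofReal (fbar x))) A := by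
  intro A hA hsub
  have hl := s_lo
  have hh := s_hi
  have hs := s_sq
  have wl := w_lo
  have wh := w_hi
  rw [withDensity_apply' _ (Tbar ⁻¹' A), withDensity_apply' _ A, Measure.restrict_restrict' measurableSet_Icc,
    Measure.restrict_restrict' measurableSet_Icc, preim A hsub, inter_eq_left.2 hsub]
  set S := A ∩ Iio (Real.sqrt 2) with hSdef
  set K := A ∩ Iic (2 * (Real.sqrt 2 - 1)) with hKdef
  have hS : MeasurableSet S := hA.inter measurableSet_Iio
  have hK : MeasurableSet K := hA.inter measurableSet_Iic
  have hApos : ∀ y ∈ A, Real.sqrt 2 - 1 ≤ y := fun y hy => (hsub hy).1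
  have hSpos : ∀ y ∈ S, 0 < y := fun y hy => by have := hApos y hy.1; linarith
  have hKpos : ∀ y ∈ K, 0 < y := fun y hy => by have := hApos y hy.1; linarith
  have m2 := meas_img 2 (by norm_num) S hS hSpos
  have m3 := meas_img 3 (by norm_num) S hS hSpos
  have m4 := meas_img 4 (by norm_num) K hK hKpos
  have l1 : ∀ y ∈ S, 2 * (Real.sqrt 2 - 1) < 2 / (y + 1) := fun y hy =>
    (g_lt y 1 _ (Real.sqrt 2) (by linarith [hSpos y hy]) (by linarith) (by linarith)).2 hy.2
  have l2 : ∀ y ∈ S, 2 - Real.sqrt 2 < 2 / (y + 2) := fun y hy =>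
    (g_lt y 2 _ (Real.sqrt 2) (by linarith [hSpos y hy]) (by linarith) (by linarith)).2 hy.2
  have l3 : ∀ y ∈ S, (6 - 2 * Real.sqrt 2) / 7 < 2 / (y + 3) := fun y hy =>
    (g_lt y 3 _ (Real.sqrt 2) (by linarith [hSpos y hy]) (by linarith) (by linarith)).2 hy.2
  have u2 : ∀ y ∈ S, 2 / (y + 2) ≤ 2 * (Real.sqrt 2 - 1) := fun y hy =>
    g_le y 2 _ (Real.sqrt 2 - 1) (by linarith [hSpos y hy]) (by linarith) (by linarith) (hApos y hy.1)
  have u3 : ∀ y ∈ S, 2 / (y + 3) ≤ 2 - Real.sqrt 2 := fun y hy =>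
    g_le y 3 _ (Real.sqrt 2 - 1) (by linarith [hSpos y hy]) (by linarith) (by linarith) (hApos y hy.1)
  have u4 : ∀ y ∈ K, 2 / (y + 4) ≤ (6 - 2 * Real.sqrt 2) / 7 := fun y hy =>
    g_le y 4 _ (Real.sqrt 2 - 1) (by linarith [hKpos y hy]) (by linarith) (by linarith) (hApos y hy.1)
  rw [lintegral_union m4, lintegral_union m3, lintegral_union m2]
  rotate_left
  · rw [disjoint_left]
    rintro _ ⟨y, hy, rfl⟩ ⟨z, hz, h⟩
    have := l1 y hy
    have := u2 z hz
    simp only at h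
    linarith
  · rw [disjoint_left]
    rintro _ (⟨y, hy, rfl⟩ | ⟨y, hy, rfl⟩) ⟨z, hz, h⟩
    · have := l1 y hy
      have := u3 z hz
      simp only at h
      linarith
    · have := l2 y hy
      have := u3 z hz
      simp only at h
      linarith
  · rw [disjoint_left]
    rintro _ ((⟨y, hy, rfl⟩ | ⟨y, hy, rfl⟩) | ⟨y, hy, rfl⟩) ⟨z, hz, h⟩
    · have := l1 y hy
      have := u4 z hz
      simp only at h
      linarith
    · have := l2 y hy
      have := u4 z hz
      simp only at h
      linarith
    · have := l3 y hy
      have := u4 z hz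
      simp only at h
      linarith
  rw [cov 1 (by norm_num) S hS hSpos
      (fun y => 1 / (y + (Real.sqrt 33 + 3) / 6) - 1 / (y + (Real.sqrt 33 - 1) / 2))
      (fun y hy => p1 y (hSpos y hy) (l1 y hy)),
    cov 2 (by norm_num) S hS hSpos
      (fun y => 1 / (y + (Real.sqrt 33 - 1) / 2) - 1 / (y + (Real.sqrt 33 + 1) / 2))
      (fun y hy => by
        rw [pd y 2 (hSpos y hy) (by norm_num) (u2 y hy)]; ring_nf),
    cov 3 (by norm_num) S hS hSpos
      (fun y => 1 / (y + (Real.sqrt 33 + 1) / 2) - 1 / (y + (Real.sqrt 33 + 3) / 2))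
      (fun y hy => by
        rw [pd y 3 (hSpos y hy) (by norm_num) (by linarith [u3 y hy])]; ring_nf),
    cov 4 (by norm_num) K hK hKpos
      (fun y => 1 / (y + (Real.sqrt 33 + 3) / 2) - 1 / (y + (Real.sqrt 33 + 5) / 2))
      (fun y hy => by
        rw [pd y 4 (hKpos y hy) (by norm_num) (by linarith [u4 y hy])]; ring_nf),
    add_lint S hS hSpos _ _ _ (by linarith) (by linarith) (by linarith),
    add_lint S hS hSpos _ _ _ (by linarith) (by linarith) (by linarith)]
  have hSA : (S : Set ℝ) =ᵐ[volume] A := by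
    have h := (Iio_ae_eq_Iic (μ := (volume : Measure ℝ)) (a := Real.sqrt 2))
    have h2 := (ae_eq_refl (μ := (volume : Measure ℝ)) A).inter h
    have h3 : A ⊆ Iic (Real.sqrt 2) := fun y hy => (hsub hy).2
    rwa [inter_eq_left.2 h3] at h2
  rw [setLIntegral_congr hSA]
  rw [← lintegral_inter_add_sdiff _ A (measurableSet_Iic (a := 2 * (Real.sqrt 2 - 1))),
    ← lintegral_inter_add_sdiff (fun x => ENNReal.ofReal (fbar x)) A
      (measurableSet_Iic (a := 2 * (Real.sqrt 2 - 1))), ← hKdef, add_right_comm,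
    add_lint K hK hKpos _ _ _ (by linarith) (by linarith) (by linarith)]
  congr 1
  · apply setLIntegral_congr_fun hK
    intro y hy
    simp only
    rw [fbar_lo y (hKpos y hy) hy.2]
  · apply setLIntegral_congr_fun (hA.diff measurableSet_Iic)
    intro y hy
    simp only
    rw [fbar_hi y (by have := hApos y hy.1; linarith) (not_le.1 hy.2)]
end

section
/- Let T̃ : [1, 2] → [1, 2] be defined by T̃(x) = 4/x − 1 for 4/3 < x ≤ 2 and T̃(x) = 5 − 4/x for 1 ≤ x ≤ 4/3. Then the measure on [1, 2] with density (1/log 3)·(1/x + 1/(4 − x)) with respect to Lebesgue measure is a T̃-invariant probability measure. -/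
open MeasureTheory Set

/-- The 4-expansion map with a flipped branch: `T̃(x) = 4/x - 1` on `(4/3, 2]`,
`T̃(x) = 5 - 4/x` on `[1, 4/3]`. -/
noncomputable def Ttilde (x : ℝ) : ℝ :=
  if 4 / 3 < x then 4 / x - 1 else 5 - 4 / x

noncomputable def dens (x : ℝ) : ENNReal :=
  ENNReal.ofReal ((1 / Real.log 3) * (1 / x + 1 / (4 - x)))

lemma dens_meas : Measurable dens := by
  unfold dens; fun_prop

lemma log3_pos : 0 < Real.log 3 := Real.log_pos (by norm_num)

lemma Ttilde_meas : Measurable Ttilde := by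
  unfold Ttilde
  exact Measurable.ite measurableSet_Ioi (by fun_prop) (by fun_prop)

lemma branch1 (s : Set ℝ) (hs : MeasurableSet s) :
    ∫⁻ x in Ttilde ⁻¹' s ∩ Ioc (4/3) 2, dens x =
      ∫⁻ y in s ∩ Icc 1 2, ENNReal.ofReal ((1 / Real.log 3) * (1 / y)) := by
  have himg : Ttilde ⁻¹' s ∩ Ioc (4/3) 2 = (fun y : ℝ => 4 / (1 + y)) '' (s ∩ Ico 1 2) := by
    ext x
    simp only [mem_inter_iff, mem_preimage, mem_Ioc, mem_image, mem_Ico]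
    constructor
    · rintro ⟨h1, h2, h3⟩
      have hx : 0 < x := by linarith
      rw [Ttilde, if_pos h2] at h1
      refine ⟨4 / x - 1, ⟨h1, ?_, ?_⟩, ?_⟩
      · have : 2 ≤ 4 / x := by rw [le_div_iff₀ hx]; linarith
        linarith
      · have : 4 / x < 3 := by rw [div_lt_iff₀ hx]; linarith
        linarith
      · field_simp; ring
    · rintro ⟨y, ⟨h1, h2, h3⟩, rfl⟩
      have hy : 0 < 1 + y := by linarith
      have h4 : 4 / 3 < 4 / (1 + y) := by rw [lt_div_iff₀ hy]; linarith
      refine ⟨?_, h4, ?_⟩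
      · rw [Ttilde, if_pos h4]
        convert h1 using 1
        field_simp; ring
      · rw [div_le_iff₀ hy]; linarith
  have hm : MeasurableSet (s ∩ Ico (1:ℝ) 2) := hs.inter measurableSet_Ico
  rw [himg, lintegral_image_eq_lintegral_abs_deriv_mul (f' := fun y => -4 / (1 + y)^2) hm]
  · have hae : (s ∩ Icc (1:ℝ) 2 : Set ℝ) =ᵐ[volume] (s ∩ Ico (1:ℝ) 2 : Set ℝ) :=
      (Filter.EventuallyEq.refl _ s).inter Ico_ae_eq_Icc.symm
    rw [setLIntegral_congr hae]
    refine setLIntegral_congr_fun hm ?_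
    rintro y ⟨-, h2, h3⟩
    have hy : 0 < 1 + y := by linarith
    have hl := log3_pos
    simp only [dens]
    rw [← ENNReal.ofReal_mul (abs_nonneg _)]
    congr 1
    rw [abs_of_neg (by apply div_neg_of_neg_of_pos <;> [norm_num; positivity])]
    have e : 4 - 4 / (1 + y) = 4 * y / (1 + y) := by field_simp; ring
    have : y ≠ 0 := by linarith
    rw [e]; field_simp; ring
  · rintro y ⟨-, h2, h3⟩
    have hy : 1 + y ≠ 0 := by linarith
    have := ((hasDerivAt_const y (4:ℝ)).div ((hasDerivAt_id y).const_add 1) hy)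
    refine (this.congr_deriv ?_).hasDerivWithinAt
    simp
  · rintro a ⟨-, h2, h3⟩ b ⟨-, h4, h5⟩ hab
    have ha : 1 + a ≠ 0 := by linarith
    have hb : 1 + b ≠ 0 := by linarith
    simp only at hab
    rw [div_eq_div_iff ha hb] at hab
    linarith

lemma branch2 (s : Set ℝ) (hs : MeasurableSet s) :
    ∫⁻ x in Ttilde ⁻¹' s ∩ Icc 1 (4/3), dens x =
      ∫⁻ y in s ∩ Icc 1 2, ENNReal.ofReal ((1 / Real.log 3) * (1 / (4 - y))) := by
  have himg : Ttilde ⁻¹' s ∩ Icc 1 (4/3) = (fun y : ℝ => 4 / (5 - y)) '' (s ∩ Icc 1 2) := by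
    ext x
    simp only [mem_inter_iff, mem_preimage, mem_image, mem_Icc]
    constructor
    · rintro ⟨h1, h2, h3⟩
      have hx : 0 < x := by linarith
      rw [Ttilde, if_neg (not_lt.2 h3)] at h1
      refine ⟨5 - 4 / x, ⟨h1, ?_, ?_⟩, ?_⟩
      · have : 4 / x ≤ 4 := by rw [div_le_iff₀ hx]; linarith
        linarith
      · have : 3 ≤ 4 / x := by rw [le_div_iff₀ hx]; linarith
        linarith
      · field_simp; ring
    · rintro ⟨y, ⟨h1, h2, h3⟩, rfl⟩
      have hy : 0 < 5 - y := by linarith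
      have h4 : 4 / (5 - y) ≤ 4 / 3 := by rw [div_le_iff₀ hy]; linarith
      refine ⟨?_, ?_, h4⟩
      · rw [Ttilde, if_neg (not_lt.2 h4)]
        convert h1 using 1
        field_simp; ring
      · rw [le_div_iff₀ hy]; linarith
  have hm : MeasurableSet (s ∩ Icc (1:ℝ) 2) := hs.inter measurableSet_Icc
  rw [himg, lintegral_image_eq_lintegral_abs_deriv_mul (f' := fun y => 4 / (5 - y)^2) hm]
  · refine setLIntegral_congr_fun hm ?_
    rintro y ⟨-, h2, h3⟩
    have hy : 0 < 5 - y := by linarith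
    have hl := log3_pos
    simp only [dens]
    rw [← ENNReal.ofReal_mul (abs_nonneg _)]
    congr 1
    rw [abs_of_pos (by positivity)]
    have e : 4 - 4 / (5 - y) = 4 * (4 - y) / (5 - y) := by field_simp; ring
    have : 4 - y ≠ 0 := by linarith
    rw [e]; field_simp; ring
  · rintro y ⟨-, h2, h3⟩
    have hy : 5 - y ≠ 0 := by linarith
    have := ((hasDerivAt_const y (4:ℝ)).div ((hasDerivAt_id y).const_sub 5) hy)
    refine (this.congr_deriv ?_).hasDerivWithinAt
    simp
  · rintro a ⟨-, h2, h3⟩ b ⟨-, h4, h5⟩ hab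
    have ha : 5 - a ≠ 0 := by linarith
    have hb : 5 - b ≠ 0 := by linarith
    simp only at hab
    rw [div_eq_div_iff ha hb] at hab
    linarith

lemma dens_total : ∫⁻ x in Icc (1:ℝ) 2, dens x = 1 := by
  have hl := log3_pos
  have hd : ∀ x ∈ Icc (1:ℝ) 2, HasDerivAt
      (fun x => (1 / Real.log 3) * (Real.log x - Real.log (4 - x)))
      ((1 / Real.log 3) * (1 / x + 1 / (4 - x))) x := by
    rintro x ⟨h1, h2⟩
    have hx : x ≠ 0 := by linarith
    have hx' : 4 - x ≠ 0 := by linarith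
    have := (((hasDerivAt_id x).log hx).sub (((hasDerivAt_id x).const_sub 4).log hx')).const_mul
      (1 / Real.log 3)
    refine this.congr_deriv ?_
    simp only [id]; ring
  have hc : ContinuousOn (fun x : ℝ => (1 / Real.log 3) * (1 / x + 1 / (4 - x))) (Icc 1 2) := by
    refine continuousOn_const.mul (.add ?_ ?_)
    · exact continuousOn_const.div continuousOn_id (fun x hx => by have := hx.1; exact (by linarith : x ≠ 0))
    · exact continuousOn_const.div (by fun_prop) (fun x hx => by have := hx.2; linarith)
  have hI : ∫ x in (1:ℝ)..2, (1 / Real.log 3) * (1 / x + 1 / (4 - x)) = 1 := by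
    rw [intervalIntegral.integral_eq_sub_of_hasDerivAt
      (f := fun x => (1 / Real.log 3) * (Real.log x - Real.log (4 - x)))]
    · norm_num
    · rw [uIcc_of_le (by norm_num)]; exact hd
    · apply ContinuousOn.intervalIntegrable
      rw [uIcc_of_le (by norm_num)]; exact hc
  unfold dens
  rw [← ofReal_integral_eq_lintegral_ofReal hc.integrableOn_Icc, integral_Icc_eq_integral_Ioc,
    ← intervalIntegral.integral_of_le (by norm_num), hI, ENNReal.ofReal_one]
  refine (ae_restrict_iff' measurableSet_Icc).2 (.of_forall ?_)
  rintro x ⟨h1, h2⟩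
  have : 0 < 4 - x := by linarith
  have : 0 < x := by linarith
  simp only [Pi.zero_apply]
  positivity

theorem stmt_10 :
    MeasurePreserving Ttilde
      ((volume.restrict (Icc (1 : ℝ) 2)).withDensity
        (fun x => ENNReal.ofReal ((1 / Real.log 3) * (1 / x + 1 / (4 - x)))))
      ((volume.restrict (Icc (1 : ℝ) 2)).withDensity
        (fun x => ENNReal.ofReal ((1 / Real.log 3) * (1 / x + 1 / (4 - x))))) ∧
    IsProbabilityMeasure
      ((volume.restrict (Icc (1 : ℝ) 2)).withDensity
        (fun x => ENNReal.ofReal ((1 / Real.log 3) * (1 / x + 1 / (4 - x))))) := by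
  change MeasurePreserving Ttilde ((volume.restrict (Icc (1 : ℝ) 2)).withDensity dens)
    ((volume.restrict (Icc (1 : ℝ) 2)).withDensity dens) ∧
    IsProbabilityMeasure ((volume.restrict (Icc (1 : ℝ) 2)).withDensity dens)
  refine ⟨⟨Ttilde_meas, ?_⟩, ⟨?_⟩⟩
  · ext s hs
    have hp := Ttilde_meas hs
    rw [Measure.map_apply Ttilde_meas hs, withDensity_apply _ hp, withDensity_apply _ hs,
      Measure.restrict_restrict hp, Measure.restrict_restrict hs]
    have hu : Ttilde ⁻¹' s ∩ Icc 1 2 =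
        (Ttilde ⁻¹' s ∩ Icc 1 (4/3)) ∪ (Ttilde ⁻¹' s ∩ Ioc (4/3) 2) := by
      rw [← inter_union_distrib_left, Icc_union_Ioc_eq_Icc (by norm_num) (by norm_num)]
    rw [hu, lintegral_union (hp.inter measurableSet_Ioc), branch1 s hs, branch2 s hs,
      ← lintegral_add_left (by fun_prop)]
    · refine setLIntegral_congr_fun (hs.inter measurableSet_Icc) ?_
      rintro y ⟨-, h1, h2⟩
      have hl := log3_pos
      have : 0 < 4 - y := by linarith
      have : 0 < y := by linarith
      simp only [dens]
      rw [← ENNReal.ofReal_add (by positivity) (by positivity)]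
      congr 1; ring
    · rw [Set.disjoint_left]
      rintro x ⟨-, h1⟩ ⟨-, h2⟩
      exact absurd h2.1 (not_lt.2 h1.2)
  · rw [withDensity_apply _ MeasurableSet.univ, Measure.restrict_univ, dens_total]
end

section
/- Let T̃ : [1, 2] → [1, 2] be defined by T̃(x) = 4/x − 1 for 4/3 < x ≤ 2 and T̃(x) = 5 − 4/x for 1 ≤ x ≤ 4/3, and set ε₁(x) = 1, d₁(x) = 1 for x ∈ (4/3, 2] and ε₁(x) = −1, d₁(x) = 5 for x ∈ [1, 4/3]. Define 𝒯 on Ω = [1, 2] × [−1, ∞) by 𝒯(x, y) = (T̃(x), 4ε₁(x)/(d₁(x) + y)). Then 𝒯 maps Ω into Ω and preserves the probability measure on Ω with density (1/log 3)·4/(4 + xy)² with respect to two-dimensional Lebesgue measure. -/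
open MeasureTheory Set

/-- The sign `ε₁(x)`: `1` on `(4/3, 2]` and `-1` on `[1, 4/3]`. -/
noncomputable def eps1 (x : ℝ) : ℝ := if 4 / 3 < x then 1 else -1

/-- The digit `d₁(x)`: `1` on `(4/3, 2]` and `5` on `[1, 4/3]`. -/
noncomputable def dig1 (x : ℝ) : ℝ := if 4 / 3 < x then 1 else 5

/-- The natural extension map `𝒯(x, y) = (T̃(x), 4ε₁(x)/(d₁(x) + y))`. -/
noncomputable def natExt (p : ℝ × ℝ) : ℝ × ℝ :=
  (Ttilde p.1, 4 * eps1 p.1 / (dig1 p.1 + p.2))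

noncomputable def gden (p : ℝ × ℝ) : ENNReal :=
  ENNReal.ofReal ((1 / Real.log 3) * 4 / (4 + p.1 * p.2) ^ 2)

noncomputable def brF (e d : ℝ) (p : ℝ × ℝ) : ℝ × ℝ := (e * (4 / p.1 - d), 4 * e / (d + p.2))

lemma branch_int (e d : ℝ) (he : e ^ 2 = 1) (R : Set (ℝ × ℝ)) (hR : MeasurableSet R)
    (h : ∀ p ∈ R, 0 < p.1 ∧ 0 < d + p.2 ∧ 0 < 4 + p.1 * p.2) :
    ∫⁻ p in brF e d '' R, gden p = ∫⁻ p in R, gden p := by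
  have he0 : e ≠ 0 := by rintro rfl; norm_num at he
  rw [lintegral_image_eq_lintegral_abs_det_fderiv_mul volume hR
    (f' := fun p => ((ContinuousLinearMap.toSpanSingleton ℝ (e * (-4 / p.1 ^ 2))).prodMap
      (ContinuousLinearMap.toSpanSingleton ℝ (-(4 * e) / (d + p.2) ^ 2))))]
  · refine setLIntegral_congr_fun hR ?_
    intro p hp
    obtain ⟨h1, h2, h3⟩ := h p hp
    have hdet : (((ContinuousLinearMap.toSpanSingleton ℝ (e * (-4 / p.1 ^ 2))).prodMap
      (ContinuousLinearMap.toSpanSingleton ℝ (-(4 * e) / (d + p.2) ^ 2)))).det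
        = 16 / (p.1 ^ 2 * (d + p.2) ^ 2) := by
      rw [ContinuousLinearMap.det, ContinuousLinearMap.coe_prodMap, LinearMap.det_prodMap]
      simp only [LinearMap.det_ring, ContinuousLinearMap.coe_coe,
        ContinuousLinearMap.toSpanSingleton_apply, smul_eq_mul, one_mul]
      have h2' := h2.ne'
      field_simp
      linear_combination 16 * he
    simp only [hdet, gden, brF]
    rw [← ENNReal.ofReal_mul (abs_nonneg _), abs_of_pos (by positivity)]
    congr 1
    have h2' := h2.ne'
    have h3' := h3.ne'
    have key : 4 + e * (4 / p.1 - d) * (4 * e / (d + p.2))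
        = 4 * (4 + p.1 * p.2) / (p.1 * (d + p.2)) := by
      field_simp
      linear_combination (4 - p.1 * d) * he
    rw [key]
    field_simp
    norm_num
  · intro p hp
    obtain ⟨h1, h2, h3⟩ := h p hp
    have a : HasDerivAt (fun x : ℝ => e * (4 / x - d)) (e * (-4 / p.1 ^ 2)) p.1 := by
      have := (((hasDerivAt_const p.1 (4:ℝ)).div (hasDerivAt_id p.1) h1.ne').sub_const d).const_mul e
      refine this.congr_deriv ?_
      simp
    have b : HasDerivAt (fun y : ℝ => 4 * e / (d + y)) (-(4 * e) / (d + p.2) ^ 2) p.2 := by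
      have := (hasDerivAt_const p.2 (4 * e)).div ((hasDerivAt_id p.2).const_add d) h2.ne'
      refine this.congr_deriv ?_
      simp
    exact (HasFDerivAt.prodMap p a.hasFDerivAt b.hasFDerivAt).hasFDerivWithinAt
  · intro p hp q hq hpq
    obtain ⟨h1, h2, h3⟩ := h p hp
    obtain ⟨k1, k2, k3⟩ := h q hq
    simp only [brF, Prod.mk.injEq] at hpq
    obtain ⟨u, v⟩ := hpq
    have u' := mul_left_cancel₀ he0 u
    have u'' : 4 / p.1 = 4 / q.1 := by linarith
    rw [div_eq_div_iff h1.ne' k1.ne'] at u''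
    rw [div_eq_div_iff h2.ne' k2.ne'] at v
    have v' := mul_left_cancel₀ (mul_ne_zero (by norm_num) he0) v
    ext <;> linarith

lemma gden_meas : Measurable gden := by unfold gden; fun_prop

lemma natExt_meas : Measurable natExt := by
  unfold natExt Ttilde eps1 dig1
  have h : MeasurableSet {a : ℝ × ℝ | 4 / 3 < a.1} := measurableSet_lt (by fun_prop) (by fun_prop)
  refine Measurable.prodMk (Measurable.ite h (by fun_prop) (by fun_prop)) ?_
  refine Measurable.div (Measurable.const_mul (Measurable.ite h (by fun_prop) (by fun_prop)) _)
    (Measurable.add (Measurable.ite h (by fun_prop) (by fun_prop)) (by fun_prop))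

lemma natExt_maps :
    MapsTo natExt (Icc (1 : ℝ) 2 ×ˢ Ici (-1 : ℝ)) (Icc (1 : ℝ) 2 ×ˢ Ici (-1 : ℝ)) := by
  rintro ⟨x, y⟩ ⟨⟨h1, h2⟩, h3⟩
  simp only [mem_Ici] at h1 h2 h3
  have hx : 0 < x := by linarith
  simp only [natExt, Ttilde, eps1, dig1]
  split_ifs with h
  · refine ⟨⟨?_, ?_⟩, ?_⟩
    · have : 2 ≤ 4 / x := by rw [le_div_iff₀ hx]; linarith
      simp only; linarith
    · have : 4 / x ≤ 3 := by rw [div_le_iff₀ hx]; linarith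
      simp only; linarith
    · have : 0 ≤ 4 * 1 / (1 + y) := div_nonneg (by norm_num) (by linarith)
      simp only [mem_Ici]; linarith
  · push Not at h
    refine ⟨⟨?_, ?_⟩, ?_⟩
    · have : 4 / x ≤ 4 := by rw [div_le_iff₀ hx]; linarith
      simp only; linarith
    · have : 3 ≤ 4 / x := by rw [le_div_iff₀ hx]; linarith
      simp only; linarith
    · simp only [mem_Ici]
      rw [le_div_iff₀ (by linarith)]; linarith

lemma image_A (s : Set (ℝ × ℝ)) :
    brF 1 1 '' (natExt ⁻¹' s ∩ (Ioc (4/3 : ℝ) 2 ×ˢ Ioi (-1 : ℝ))) = s ∩ (Ico (1:ℝ) 2 ×ˢ Ioi (0:ℝ)) := by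
  have hb : ∀ p : ℝ × ℝ, p ∈ (Ioc (4/3 : ℝ) 2 ×ˢ Ioi (-1 : ℝ)) → natExt p = brF 1 1 p := by
    rintro ⟨x, y⟩ ⟨⟨h1, h2⟩, h3⟩
    simp only at h1
    simp [natExt, Ttilde, eps1, dig1, brF, h1]
  ext q
  constructor
  · rintro ⟨⟨x, y⟩, ⟨hs, hm⟩, rfl⟩
    have e := hb _ hm
    refine ⟨by rw [← e]; exact hs, ?_⟩
    obtain ⟨⟨h1, h2⟩, h3⟩ := hm
    simp only [mem_Ioi] at h1 h2 h3
    have hx : 0 < x := by linarith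
    refine ⟨⟨?_, ?_⟩, ?_⟩
    · have : 2 ≤ 4 / x := by rw [le_div_iff₀ hx]; linarith
      simp only [brF]; linarith
    · have : 4 / x < 3 := by rw [div_lt_iff₀ hx]; linarith
      simp only [brF]; linarith
    · simp only [brF, mem_Ioi]
      exact div_pos (by norm_num) (by linarith)
  · obtain ⟨u, v⟩ := q
    rintro ⟨hs, ⟨h1, h2⟩, h3⟩
    simp only [mem_Ioi] at h1 h2 h3
    have hu : 0 < u + 1 := by linarith
    have hm : ((4 / (u + 1), 4 / v - 1) : ℝ × ℝ) ∈ (Ioc (4/3 : ℝ) 2 ×ˢ Ioi (-1 : ℝ)) := by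
      refine ⟨⟨?_, ?_⟩, ?_⟩
      · simp only; rw [div_lt_div_iff₀ (by norm_num) hu]; linarith
      · simp only; rw [div_le_iff₀ hu]; linarith
      · have : 0 < 4 / v := by positivity
        simp only [mem_Ioi]; linarith
    have e : brF 1 1 (4 / (u + 1), 4 / v - 1) = (u, v) := by
      simp only [brF, Prod.mk.injEq]
      constructor <;> field_simp <;> ring
    exact ⟨_, ⟨by rw [mem_preimage, hb _ hm, e]; exact hs, hm⟩, e⟩

lemma image_B (s : Set (ℝ × ℝ)) :
    brF (-1) 5 '' (natExt ⁻¹' s ∩ (Icc (1 : ℝ) (4/3) ×ˢ Ioi (-1 : ℝ)))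
      = s ∩ (Icc (1:ℝ) 2 ×ˢ Ioo (-1) (0:ℝ)) := by
  have hb : ∀ p : ℝ × ℝ, p ∈ (Icc (1 : ℝ) (4/3) ×ˢ Ioi (-1 : ℝ)) → natExt p = brF (-1) 5 p := by
    rintro ⟨x, y⟩ ⟨⟨h1, h2⟩, h3⟩
    simp only at h2
    simp [natExt, Ttilde, eps1, dig1, brF, not_lt.2 h2]
  ext q
  constructor
  · rintro ⟨⟨x, y⟩, ⟨hs, hm⟩, rfl⟩
    have e := hb _ hm
    refine ⟨by rw [← e]; exact hs, ?_⟩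
    obtain ⟨⟨h1, h2⟩, h3⟩ := hm
    simp only [mem_Ioi] at h1 h2 h3
    have hx : 0 < x := by linarith
    refine ⟨⟨?_, ?_⟩, ?_, ?_⟩
    · have : 4 / x ≤ 4 := by rw [div_le_iff₀ hx]; linarith
      simp only [brF]; linarith
    · have : 3 ≤ 4 / x := by rw [le_div_iff₀ hx]; linarith
      simp only [brF]; linarith
    · simp only [brF]
      rw [lt_div_iff₀ (by linarith)]; linarith
    · exact div_neg_of_neg_of_pos (by norm_num) (by simp only; linarith)
  · obtain ⟨u, v⟩ := q
    rintro ⟨hs, ⟨h1, h2⟩, h3, h4⟩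
    simp only at h1 h2 h3 h4
    have hu : 0 < 5 - u := by linarith
    have hv : 0 < -v := by linarith
    have hm : ((4 / (5 - u), 4 / (-v) - 5) : ℝ × ℝ) ∈ (Icc (1 : ℝ) (4/3) ×ˢ Ioi (-1 : ℝ)) := by
      refine ⟨⟨?_, ?_⟩, ?_⟩
      · simp only; rw [le_div_iff₀ hu]; linarith
      · simp only; rw [div_le_div_iff₀ hu (by norm_num)]; linarith
      · have : 4 < 4 / (-v) := by rw [lt_div_iff₀ hv]; linarith
        simp only [mem_Ioi]; linarith
    have e : brF (-1) 5 (4 / (5 - u), 4 / (-v) - 5) = (u, v) := by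
      have hv' : v ≠ 0 := by linarith
      have hu' := hu.ne'
      simp only [brF, Prod.mk.injEq]
      constructor <;> field_simp <;> ring
    exact ⟨_, ⟨by rw [mem_preimage, hb _ hm, e]; exact hs, hm⟩, e⟩

lemma ae_fst (c : ℝ) : ∀ᵐ p : ℝ × ℝ, p.1 ≠ c := by
  have : (volume : Measure (ℝ × ℝ)) {p | p.1 = c} = 0 := by
    have : {p : ℝ × ℝ | p.1 = c} = {c} ×ˢ univ := by ext; simp
    rw [this, Measure.volume_eq_prod, Measure.prod_prod]; simp
  rw [ae_iff]; simpa using this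

lemma ae_snd (c : ℝ) : ∀ᵐ p : ℝ × ℝ, p.2 ≠ c := by
  have : (volume : Measure (ℝ × ℝ)) {p | p.2 = c} = 0 := by
    have : {p : ℝ × ℝ | p.2 = c} = univ ×ˢ {c} := by ext; simp
    rw [this, Measure.volume_eq_prod, Measure.prod_prod]; simp
  rw [ae_iff]; simpa using this

lemma pres (s : Set (ℝ × ℝ)) (hs : MeasurableSet s) :
    ∫⁻ p in natExt ⁻¹' s ∩ (Icc (1 : ℝ) 2 ×ˢ Ici (-1 : ℝ)), gden p
      = ∫⁻ p in s ∩ (Icc (1 : ℝ) 2 ×ˢ Ici (-1 : ℝ)), gden p := by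
  have hpre := natExt_meas hs
  have e1 : (natExt ⁻¹' s ∩ (Icc (1 : ℝ) 2 ×ˢ Ici (-1 : ℝ)) : Set (ℝ × ℝ)) =ᵐ[volume]
      ((natExt ⁻¹' s ∩ (Ioc (4/3 : ℝ) 2 ×ˢ Ioi (-1 : ℝ))) ∪
       (natExt ⁻¹' s ∩ (Icc (1 : ℝ) (4/3) ×ˢ Ioi (-1 : ℝ))) : Set (ℝ × ℝ)) := by
    rw [Filter.eventuallyEq_set]
    filter_upwards [ae_snd (-1)] with p hp
    simp only [mem_inter_iff, mem_union, mem_prod, mem_Icc, mem_Ici, mem_Ioc, mem_Ioi]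
    constructor
    · rintro ⟨h, ⟨h1, h2⟩, h3⟩
      have h3' := lt_of_le_of_ne h3 hp.symm
      rcases lt_or_ge (4/3) p.1 with h4 | h4
      · exact Or.inl ⟨h, ⟨h4, h2⟩, h3'⟩
      · exact Or.inr ⟨h, ⟨h1, h4⟩, h3'⟩
    · rintro (⟨h, ⟨h1, h2⟩, h3⟩ | ⟨h, ⟨h1, h2⟩, h3⟩)
      · exact ⟨h, ⟨by linarith, h2⟩, h3.le⟩
      · exact ⟨h, ⟨h1, by linarith⟩, h3.le⟩
  have e2 : (s ∩ (Icc (1 : ℝ) 2 ×ˢ Ici (-1 : ℝ)) : Set (ℝ × ℝ)) =ᵐ[volume]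
      ((s ∩ (Ico (1:ℝ) 2 ×ˢ Ioi (0:ℝ))) ∪ (s ∩ (Icc (1:ℝ) 2 ×ˢ Ioo (-1) (0:ℝ))) : Set (ℝ × ℝ)) := by
    rw [Filter.eventuallyEq_set]
    filter_upwards [ae_snd (-1), ae_snd 0, ae_fst 2] with p hp hp0 hp2
    simp only [mem_inter_iff, mem_union, mem_prod, mem_Icc, mem_Ici, mem_Ico, mem_Ioo, mem_Ioi]
    constructor
    · rintro ⟨h, ⟨h1, h2⟩, h3⟩
      have h3' := lt_of_le_of_ne h3 hp.symm
      rcases lt_or_gt_of_ne hp0 with h4 | h4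
      · exact Or.inr ⟨h, ⟨h1, h2⟩, h3', h4⟩
      · exact Or.inl ⟨h, ⟨h1, lt_of_le_of_ne h2 hp2⟩, h4⟩
    · rintro (⟨h, ⟨h1, h2⟩, h3⟩ | ⟨h, ⟨h1, h2⟩, h3, h4⟩)
      · exact ⟨h, ⟨h1, h2.le⟩, by linarith⟩
      · exact ⟨h, ⟨h1, h2⟩, h3.le⟩
  have mA : MeasurableSet (natExt ⁻¹' s ∩ (Ioc (4/3 : ℝ) 2 ×ˢ Ioi (-1 : ℝ))) :=
    hpre.inter (measurableSet_Ioc.prod measurableSet_Ioi)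
  have mB : MeasurableSet (natExt ⁻¹' s ∩ (Icc (1 : ℝ) (4/3) ×ˢ Ioi (-1 : ℝ))) :=
    hpre.inter (measurableSet_Icc.prod measurableSet_Ioi)
  rw [setLIntegral_congr e1, setLIntegral_congr e2, lintegral_union mB, lintegral_union
    (hs.inter (measurableSet_Icc.prod measurableSet_Ioo)), ← image_A, ← image_B,
    branch_int 1 1 (by norm_num) _ mA, branch_int (-1) 5 (by norm_num) _ mB]
  · rintro p ⟨-, ⟨h1, h2⟩, h3⟩
    simp only [mem_Ioi] at h3
    exact ⟨by linarith, by linarith, by nlinarith⟩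
  · rintro p ⟨-, ⟨h1, h2⟩, h3⟩
    simp only [mem_Ioi] at h3
    exact ⟨by linarith, by linarith, by nlinarith⟩
  · rw [Set.disjoint_left]
    rintro p ⟨-, ⟨h1, h2⟩, h3⟩ ⟨-, ⟨h4, h5⟩, h6, h7⟩
    simp only [mem_Ioi] at h3
    linarith
  · rw [Set.disjoint_left]
    rintro p ⟨-, ⟨h1, h2⟩, h3⟩ ⟨-, ⟨h4, h5⟩, h6⟩
    linarith

lemma inner_int (x : ℝ) (hx : x ∈ Icc (1:ℝ) 2) :
    ∫⁻ y in Ici (-1:ℝ), gden (x, y) = ENNReal.ofReal ((1 / Real.log 3) * (1 / x + 1 / (4 - x))) := by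
  obtain ⟨h1, h2⟩ := hx
  have hx0 : 0 < x := by linarith
  have hl : 0 < Real.log 3 := Real.log_pos (by norm_num)
  rw [setLIntegral_congr Ioi_ae_eq_Ici.symm]
  have hd : ∀ y ∈ Ici (-1:ℝ), HasDerivAt (fun y => -(1 / Real.log 3 * (4 / x)) / (4 + x * y))
      ((1 / Real.log 3) * 4 / (4 + x * y) ^ 2) y := by
    intro y hy
    simp only [mem_Ici] at hy
    have hp : 0 < 4 + x * y := by nlinarith
    have := (hasDerivAt_const y (-(1 / Real.log 3 * (4 / x)))).div
      (((hasDerivAt_id y).const_mul x).const_add 4) hp.ne'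
    refine this.congr_deriv ?_
    have := hp.ne'
    simp
    field_simp
  have hpos : ∀ y ∈ Ioi (-1:ℝ), 0 ≤ (1 / Real.log 3) * 4 / (4 + x * y) ^ 2 := by
    intro y _; positivity
  have ht : Filter.Tendsto (fun y => -(1 / Real.log 3 * (4 / x)) / (4 + x * y)) Filter.atTop
      (nhds 0) := by
    apply Filter.Tendsto.const_div_atTop
    exact Filter.tendsto_atTop_add_const_left _ _ (Filter.Tendsto.const_mul_atTop hx0 Filter.tendsto_id)
  have hi := integrableOn_Ioi_deriv_of_nonneg' hd hpos ht
  have hv := integral_Ioi_of_hasDerivAt_of_nonneg' hd hpos ht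
  unfold gden
  simp only
  rw [← ofReal_integral_eq_lintegral_ofReal hi (Filter.Eventually.of_forall fun y => by
    simp only [Pi.zero_apply]; positivity), hv]
  congr 1
  have : 4 - x ≠ 0 := by linarith
  have h' : 4 + x * -1 ≠ 0 := by linarith
  have h'' : 4 + x * -1 = 4 - x := by ring
  rw [h'']
  field_simp
  ring

lemma total : ∫⁻ p in Icc (1 : ℝ) 2 ×ˢ Ici (-1 : ℝ), gden p = 1 := by
  have hl : 0 < Real.log 3 := Real.log_pos (by norm_num)
  rw [Measure.volume_eq_prod, setLIntegral_prod _ gden_meas.aemeasurable,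
    setLIntegral_congr_fun measurableSet_Icc inner_int]
  have hc : ContinuousOn (fun x : ℝ => (1 / Real.log 3) * (1 / x + 1 / (4 - x))) (Icc 1 2) := by
    refine ContinuousOn.mul continuousOn_const (ContinuousOn.add ?_ ?_)
    · exact ContinuousOn.div continuousOn_const continuousOn_id fun x hx => by
        have := hx.1; linarith
    · exact ContinuousOn.div continuousOn_const (by fun_prop) fun x hx => by
        have := hx.2; linarith
  rw [← ofReal_integral_eq_lintegral_ofReal (hc.integrableOn_Icc)]
  · rw [integral_Icc_eq_integral_Ioc, ← intervalIntegral.integral_of_le (by norm_num),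
      intervalIntegral.integral_eq_sub_of_hasDerivAt
        (f := fun x => (1 / Real.log 3) * (Real.log x - Real.log (4 - x)))]
    · norm_num
    · intro x hx
      rw [uIcc_of_le (by norm_num)] at hx
      obtain ⟨h1, h2⟩ := hx
      have a := Real.hasDerivAt_log (show x ≠ 0 by linarith)
      have b := ((hasDerivAt_id x).const_sub 4).log (show 4 - x ≠ 0 by linarith)
      refine ((a.sub b).const_mul (1 / Real.log 3)).congr_deriv ?_
      simp only [id]; ring
    · apply ContinuousOn.intervalIntegrable
      rwa [uIcc_of_le (by norm_num)]
  · filter_upwards [ae_restrict_mem measurableSet_Icc] with x hx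
    obtain ⟨h1, h2⟩ := hx
    have : 0 < 4 - x := by linarith
    have : 0 < x := by linarith
    simp only [Pi.zero_apply]
    positivity

theorem stmt_11 :
    MapsTo natExt (Icc (1 : ℝ) 2 ×ˢ Ici (-1 : ℝ)) (Icc (1 : ℝ) 2 ×ˢ Ici (-1 : ℝ)) ∧
    MeasurePreserving natExt
      ((volume.restrict (Icc (1 : ℝ) 2 ×ˢ Ici (-1 : ℝ))).withDensity
        (fun p => ENNReal.ofReal ((1 / Real.log 3) * 4 / (4 + p.1 * p.2) ^ 2)))
      ((volume.restrict (Icc (1 : ℝ) 2 ×ˢ Ici (-1 : ℝ))).withDensity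
        (fun p => ENNReal.ofReal ((1 / Real.log 3) * 4 / (4 + p.1 * p.2) ^ 2))) ∧
    IsProbabilityMeasure
      ((volume.restrict (Icc (1 : ℝ) 2 ×ˢ Ici (-1 : ℝ))).withDensity
        (fun p => ENNReal.ofReal ((1 / Real.log 3) * 4 / (4 + p.1 * p.2) ^ 2))) := by
  have hO : MeasurableSet (Icc (1 : ℝ) 2 ×ˢ Ici (-1 : ℝ)) := measurableSet_Icc.prod measurableSet_Ici
  refine ⟨natExt_maps, ⟨natExt_meas, ?_⟩, ⟨?_⟩⟩
  · ext s hs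
    rw [Measure.map_apply natExt_meas hs, withDensity_apply _ (natExt_meas hs),
      withDensity_apply _ hs, Measure.restrict_restrict (natExt_meas hs),
      Measure.restrict_restrict hs]
    exact pres s hs
  · rw [withDensity_apply _ MeasurableSet.univ, Measure.restrict_univ]
    exact total
end

section
/- Let T̂ : [1, 2] → [1, 2] be defined by T̂(x) = 4 − 4/x for 4/3 < x ≤ 2 and T̂(x) = 4/x − 2 for 1 ≤ x ≤ 4/3. Then the measure μ on [1, 2] with density f(x) = 1/x + 1/(2 − x) with respect to Lebesgue measure is T̂-invariant, i.e. μ(T̂⁻¹(A)) = μ(A) for every Borel set A ⊆ [1, 2], and μ is an infinite (σ-finite) measure: μ([1, 2]) = ∞. -/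
open MeasureTheory Set

/-- The 4-expansion map with a flipped branch: `T̂(x) = 4 - 4/x` on `(4/3, 2]`,
`T̂(x) = 4/x - 2` on `[1, 4/3]`. -/
noncomputable def That (x : ℝ) : ℝ :=
  if 4 / 3 < x then 4 - 4 / x else 4 / x - 2

lemma aux_g1 (A : Set ℝ) (hA : A ⊆ Icc (1 : ℝ) 2) :
    That ⁻¹' A ∩ Ioc (4/3) 2 = (fun y : ℝ => 4 / (4 - y)) '' (A \ {1}) := by
  ext x
  simp only [mem_inter_iff, mem_preimage, mem_Ioc, mem_image, mem_sdiff, mem_singleton_iff]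
  constructor
  · rintro ⟨h, h1, h2⟩
    have hx : x ≠ 0 := by linarith
    simp only [That, if_pos h1] at h
    refine ⟨4 - 4 / x, ⟨h, ?_⟩, ?_⟩
    · intro h3
      field_simp at h3
      linarith
    · field_simp
      ring
  · rintro ⟨y, ⟨hy, hy1⟩, rfl⟩
    obtain ⟨h1, h2⟩ := hA hy
    have h1 : 1 < y := lt_of_le_of_ne h1 (Ne.symm hy1)
    have h4 : 0 < 4 - y := by linarith
    have h5 : 4 / 3 < 4 / (4 - y) := by
      rw [lt_div_iff₀ h4]; linarith
    refine ⟨?_, h5, ?_⟩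
    · simp only [That, if_pos h5]
      convert hy using 1
      field_simp
      ring
    · rw [div_le_iff₀ h4]; linarith

lemma aux_g2 (A : Set ℝ) (hA : A ⊆ Icc (1 : ℝ) 2) :
    That ⁻¹' A ∩ Icc 1 (4/3) = (fun y : ℝ => 4 / (y + 2)) '' A := by
  ext x
  simp only [mem_inter_iff, mem_preimage, mem_Icc, mem_image]
  constructor
  · rintro ⟨h, h1, h2⟩
    have hx : x ≠ 0 := by linarith
    simp only [That, if_neg (not_lt.2 h2)] at h
    refine ⟨4 / x - 2, h, ?_⟩
    field_simp
    ring
  · rintro ⟨y, hy, rfl⟩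
    obtain ⟨h1, h2⟩ := hA hy
    have h4 : 0 < y + 2 := by linarith
    have h5 : 4 / (y + 2) ≤ 4 / 3 := by
      rw [div_le_iff₀ h4]; linarith
    refine ⟨?_, ?_, h5⟩
    · simp only [That, if_neg (not_lt.2 h5)]
      convert hy using 1
      field_simp
      ring
    · rw [le_div_iff₀ h4]; linarith

lemma aux_i1 (A : Set ℝ) (hm : MeasurableSet A) (hA : A ⊆ Icc (1 : ℝ) 2) :
    ∫⁻ x in (fun y : ℝ => 4 / (4 - y)) '' (A \ {1}), ENNReal.ofReal (1 / x + 1 / (2 - x))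
      = ∫⁻ x in A, ENNReal.ofReal (1 / (2 - x)) := by
  have hm' : MeasurableSet (A \ {1}) := hm.diff (measurableSet_singleton 1)
  rw [lintegral_image_eq_lintegral_abs_deriv_mul (f' := fun y => 4 / (4 - y)^2) hm']
  · have e : (A \ {1} : Set ℝ) =ᵐ[volume] A := sdiff_null_ae_eq_self (by simp)
    rw [setLIntegral_congr e]
    have h2 : ∀ᵐ x : ℝ ∂volume, x ≠ 2 := by simp [ae_iff]
    refine setLIntegral_congr_fun_ae hm ?_
    filter_upwards [h2] with x hx2 hx
    obtain ⟨h1, h2⟩ := hA hx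
    have h2 : x < 2 := lt_of_le_of_ne h2 hx2
    have a1 : 4 - x ≠ 0 := by linarith
    have a2 : 2 - x ≠ 0 := by linarith
    rw [← ENNReal.ofReal_mul (abs_nonneg _), abs_of_nonneg (by positivity)]
    congr 1
    have : 2 - 4 / (4 - x) = 2 * (2 - x) / (4 - x) := by field_simp; ring
    rw [this]
    field_simp
    ring
  · intro x hx
    obtain ⟨h1, h2⟩ := hA hx.1
    have a1 : 4 - x ≠ 0 := by linarith
    have := (((hasDerivAt_id x).const_sub 4).fun_inv a1).const_mul 4
    simp only [id, ← div_eq_mul_inv] at this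
    refine (this.congr_deriv ?_).hasDerivWithinAt
    field_simp
  · intro x hx y hy h
    obtain ⟨h1, h2⟩ := hA hx.1
    obtain ⟨h3, h4⟩ := hA hy.1
    have a1 : 4 - x ≠ 0 := by linarith
    have a2 : 4 - y ≠ 0 := by linarith
    simp only at h
    rw [div_eq_div_iff a1 a2] at h
    linarith

lemma aux_i2 (A : Set ℝ) (hm : MeasurableSet A) (hA : A ⊆ Icc (1 : ℝ) 2) :
    ∫⁻ x in (fun y : ℝ => 4 / (y + 2)) '' A, ENNReal.ofReal (1 / x + 1 / (2 - x))
      = ∫⁻ x in A, ENNReal.ofReal (1 / x) := by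
  rw [lintegral_image_eq_lintegral_abs_deriv_mul (f' := fun y => - (4 / (y + 2)^2)) hm]
  · refine setLIntegral_congr_fun hm ?_
    intro x hx
    obtain ⟨h1, h2⟩ := hA hx
    have a1 : x + 2 ≠ 0 := by linarith
    have a2 : x ≠ 0 := by linarith
    simp only
    rw [← ENNReal.ofReal_mul (abs_nonneg _), abs_neg, abs_of_nonneg (by positivity)]
    congr 1
    have : 2 - 4 / (x + 2) = 2 * x / (x + 2) := by field_simp; ring
    rw [this]
    field_simp
    ring
  · intro x hx
    obtain ⟨h1, h2⟩ := hA hx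
    have a1 : x + 2 ≠ 0 := by linarith
    have := (((hasDerivAt_id x).add_const 2).fun_inv a1).const_mul 4
    simp only [id, ← div_eq_mul_inv] at this
    refine (this.congr_deriv ?_).hasDerivWithinAt
    field_simp
  · intro x hx y hy h
    obtain ⟨h1, h2⟩ := hA hx
    obtain ⟨h3, h4⟩ := hA hy
    have a1 : x + 2 ≠ 0 := by linarith
    have a2 : y + 2 ≠ 0 := by linarith
    simp only at h
    rw [div_eq_div_iff a1 a2] at h
    linarith

lemma aux_meas : Measurable That := by
  unfold That
  exact Measurable.ite measurableSet_Ioi (by fun_prop) (by fun_prop)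

theorem stmt_12 :
    (∀ A : Set ℝ, MeasurableSet A → A ⊆ Icc (1 : ℝ) 2 →
      ((volume.restrict (Icc (1 : ℝ) 2)).withDensity
          (fun x => ENNReal.ofReal (1 / x + 1 / (2 - x)))) (That ⁻¹' A) =
      ((volume.restrict (Icc (1 : ℝ) 2)).withDensity
          (fun x => ENNReal.ofReal (1 / x + 1 / (2 - x)))) A) ∧
    ((volume.restrict (Icc (1 : ℝ) 2)).withDensity
        (fun x => ENNReal.ofReal (1 / x + 1 / (2 - x)))) (Icc (1 : ℝ) 2) = ⊤ := by
  constructor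
  · intro A hm hA
    have hT : MeasurableSet (That ⁻¹' A) := aux_meas hm
    rw [withDensity_apply _ hT, withDensity_apply _ hm, Measure.restrict_restrict hT,
      Measure.restrict_restrict hm, inter_eq_left.2 hA]
    have hu : That ⁻¹' A ∩ Icc 1 2 =
        (That ⁻¹' A ∩ Icc 1 (4/3)) ∪ (That ⁻¹' A ∩ Ioc (4/3) 2) := by
      rw [← inter_union_distrib_left, Icc_union_Ioc_eq_Icc (by norm_num) (by norm_num)]
    have hd : Disjoint (That ⁻¹' A ∩ Icc 1 (4/3)) (That ⁻¹' A ∩ Ioc (4/3) 2) := by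
      rw [Set.disjoint_left]
      rintro x ⟨_, h1⟩ ⟨_, h2⟩
      exact absurd h1.2 (not_le.2 h2.1)
    rw [hu, lintegral_union (hT.inter measurableSet_Ioc) hd, aux_g1 A hA, aux_g2 A hA,
      aux_i1 A hm hA, aux_i2 A hm hA, ← lintegral_add_left (by fun_prop)]
    refine setLIntegral_congr_fun hm ?_
    intro x hx
    obtain ⟨h1, h2⟩ := hA hx
    simp only
    rw [ENNReal.ofReal_add]
    · exact div_nonneg zero_le_one (by linarith)
    · exact div_nonneg zero_le_one (by linarith)
  · rw [withDensity_apply _ measurableSet_Icc, Measure.restrict_restrict measurableSet_Icc,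
      inter_self]
    by_contra h
    have hnn : 0 ≤ᵐ[volume.restrict (Icc (1:ℝ) 2)] fun x : ℝ => 1 / x + 1 / (2 - x) := by
      refine (ae_restrict_iff' measurableSet_Icc).2 (Filter.Eventually.of_forall ?_)
      rintro x ⟨h1, h2⟩
      exact add_nonneg (div_nonneg zero_le_one (by linarith)) (div_nonneg zero_le_one (by linarith))
    rw [← Ne, lintegral_ofReal_ne_top_iff_integrable
      (by apply Measurable.aestronglyMeasurable; fun_prop) hnn] at h
    have h1 : IntegrableOn (fun x : ℝ => 1 / x) (Icc 1 2) := by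
      apply ContinuousOn.integrableOn_Icc
      apply ContinuousOn.div (by fun_prop) (by fun_prop)
      rintro x ⟨h1, h2⟩
      linarith
    have h2 : IntegrableOn (fun x : ℝ => (x - 2)⁻¹) (Icc 1 2) := by
      have := (Integrable.sub h1 h)
      refine this.congr (Filter.Eventually.of_forall fun x => ?_)
      simp only [Pi.sub_apply]
      rw [← neg_sub 2 x, inv_neg]
      ring
    have h3 := (intervalIntegrable_iff_integrableOn_Icc_of_le (by norm_num)).2 h2
    rw [intervalIntegrable_sub_inv_iff] at h3
    rcases h3 with h3 | h3
    · norm_num at h3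
    · exact h3 right_mem_uIcc
end
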